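/- arXiv:1112.5709 — 2 statements merged into one kernel-verified Lean document; each statement's English description precedes it below -/
import Mathlib

section
/- Let G be a finitely generated group. Then G has a Stallings section if and only if G is virtually free, i.e. G has a free subgroup of finite index. -/
/-! ### Why the theorem is true

**A Stallings section makes `G` virtually free.** Let `between g` be the set of values of prefixes
of words of `S_g`. It is finite because `S_g` is regular (`between_finite`), it satisfies the
triangle inequality `between (g * h) ⊆ between g ∪ g • between h` because of (S2)
(`between_mul`), and its cardinality tends to infinity with `g`, since the values of the prefixes
take all word lengths up to that of `g` (`between_proper`). For a fixed `y`, consider the set of `x`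
such that `1` is not between `x` and `y`. By the triangle inequality `1` is between the two ends
(in one of the two orders) of every edge of the boundary of this set in the Cayley graph. The edges
with this property form a finite set independent of `y`; let `k` be its size. So only finitely many
cuts arise in this way, and they have at most `k` boundary edges. Finitely many optimal cuts (in the
sense below) generate them, and for all but boundedly many of the points `v` between `1` and `g`, a
translate by `v` of one of these optimal cuts separates `1` from `g`. Therefore only finitely many
`g` are not moved far by the action on the tree of optimal cuts (`Cuts.virtuallyFree_of_between`).

The cuts of a connected graph with at most `k` boundary edges are Boolean combinations of
*optimal* ones (`Cuts.gen_opt`): those which are not Boolean combinations of cuts with a smaller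
boundary or, among cuts with equally small boundary, of cuts crossing fewer thin cuts. Each edge
bounds only finitely many thin cuts (`Cuts.thin_finite`), and submodularity shows that optimal cuts
are pairwise nested (`Cuts.opt_nested`). A nested family of cuts is the set of oriented edges of
a tree (`CutTree.isRootedTree`), on which `G` acts with finite stabilizers and finitely many orbits
(`CutTree.virtuallyFree_of_nested`).

Bass–Serre theory is replaced by a direct argument (`TreeAction.virtuallyFree_of_action`). If `m` is
a common multiple of the orders of the stabilizers, the action on the vertex set `V` lifts to
`V × Fin m` so that the stabilizers act freely on the fibres. Two free actions of a finite group on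
a finite set are isomorphic, so the fibres over adjacent vertices can be identified equivariantly,
and `G` permutes the flat sections of the resulting covering, which are `m` in number because a tree
has no cycles. The stabilizer of a flat section has finite index and acts freely on the tree, so it
is free.

**A virtually free group has a Stallings section.** Let `F` be a free subgroup of finite index, with
basis `ι` (finite, as `G` is finitely generated), and let `T` be the finite set of cosets of `F`,
each with a representative. The section consists of the reduced forms of the words `t f t'⁻¹` over
`ι ⊕ T`, with `t`, `t'` coset representatives and `f` a reduced word over `ι`. Reduced words of this
shape are recognised by their first, last and consecutive letters, so they form a regular language
(`triLang_eq`, `isRegular_localLang`). For given `t`, `t'` and `g` at most one `f` is possible,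
hence every `S_g` is finite. For (S2), a word `t f t'⁻¹` representing `g * h` is the reduction of
`(t f₁ t''⁻¹) (t'' f₂ t'⁻¹)`, where `t''` is chosen such that the first factor represents `g`.
-/

/-!  Common framework: words over an involutive alphabet Ã = A ∪ A⁻¹ (modelled as
`α × Bool`), free reduction, matched epimorphisms, Stallings sections and
Ã-automata, following Silva–Soler-Escrivà–Ventura. -/

/-- A word over the involutive alphabet Ã = A ∪ A⁻¹: the letter `(a, tt)` denotes
`a` and `(a, ff)` denotes `a⁻¹` (the `FreeGroup` convention). -/
abbrev Word (α : Type) : Type := List (α × Bool)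

namespace Stallings

instance {β : Type} : HasSubset (Language β) := ⟨fun L M => ∀ w ∈ L, w ∈ M⟩
instance {β : Type} : Union (Language β) := ⟨fun L M => {w | w ∈ L ∨ w ∈ M}⟩
instance {β : Type} : Inter (Language β) := ⟨fun L M => {w | w ∈ L ∧ w ∈ M}⟩
instance {β : Type} : EmptyCollection (Language β) := ⟨(∅ : Set (List β))⟩

variable {α : Type} {G : Type} [Group G]

/-- The formal inverse of a letter of Ã. -/
def letterInv (x : α × Bool) : α × Bool := (x.1, !x.2)

/-- The formal inverse `w⁻¹` of a word over Ã. -/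
def wordInv (w : Word α) : Word α := (w.map letterInv).reverse

/-- The free reduction `w̄` of a word over Ã (iterated deletion of factors `a a⁻¹`). -/
noncomputable def redW (w : Word α) : Word α :=
  letI := Classical.decEq α
  FreeGroup.reduce w

/-- The reduction `L̄` of a language over Ã. -/
noncomputable def red (L : Language (α × Bool)) : Language (α × Bool) :=
  redW '' L

/-- The set `R_A` of reduced words over Ã. -/
noncomputable def Reduced : Language (α × Bool) := {w | redW w = w}

/-- Evaluation of a monoid homomorphism `π : Ã* → G` at a word. -/
def ev (π : FreeMonoid (α × Bool) →* G) (w : Word α) : G :=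
  π (FreeMonoid.ofList w)

/-- The image of a language under (evaluation of) `π`. -/
def evImg (π : FreeMonoid (α × Bool) →* G) (L : Language (α × Bool)) : Set G :=
  {g | ∃ w ∈ L, ev π w = g}

/-- A matched epimorphism (m-epi) `π : Ã* → G`: a surjective monoid homomorphism
sending formal inverses to inverses. -/
structure IsMEpi (π : FreeMonoid (α × Bool) →* G) : Prop where
  surjective : Function.Surjective π
  matched : ∀ (a : α) (b : Bool),
    π (FreeMonoid.of (a, !b)) = (π (FreeMonoid.of (a, b)))⁻¹

/-- `S_X = Xπ⁻¹ ∩ S`, for `X ⊆ G`. -/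
def sub (S : Language (α × Bool)) (π : FreeMonoid (α × Bool) →* G) (X : Set G) :
    Language (α × Bool) :=
  {w ∈ S | ev π w ∈ X}

/-- A Stallings section for an m-epi `π : Ã* → G`: a regular section `S ⊆ R_A`
such that each `S_g` is regular (S1), and `S_{gh} ⊆ (S_g S_h)‾` (S2). -/
structure IsStallingsSection (π : FreeMonoid (α × Bool) →* G)
    (S : Language (α × Bool)) : Prop where
  regular : S.IsRegular
  reduced : S ⊆ Reduced
  inv_mem : ∀ w ∈ S, wordInv w ∈ S
  exists_rep : ∀ g : G, ∃ w ∈ S, ev π w = g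
  s1 : ∀ g : G, (sub S π {g}).IsRegular
  s2 : ∀ g h : G, sub S π {g * h} ⊆ red (sub S π {g} * sub S π {h})

/-- A group has a Stallings section if some m-epi onto it (from the free monoid on
an involutive finite alphabet) admits a Stallings section. -/
def HasStallingsSection (G : Type) [Group G] : Prop :=
  ∃ (α : Type) (π : FreeMonoid (α × Bool) →* G) (S : Language (α × Bool)),
    Finite α ∧ IsMEpi π ∧ IsStallingsSection π S

/-- `Pref L`: the set of prefixes of words of `L`. -/
def Pref (L : Language (α × Bool)) : Language (α × Bool) :=
  {u | ∃ v, u ++ v ∈ L}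

/-- An extendable Stallings section: every `u ∈ S` admits a reduced word `v` with
`u vⁿ ∈ S` for all `n` and `u ∈ Pref (S_{(u vⁿ u⁻¹)π})` for almost all `n`. -/
def Extendable (π : FreeMonoid (α × Bool) →* G) (S : Language (α × Bool)) : Prop :=
  ∀ u ∈ S, ∃ v : Word α, v ∈ Reduced ∧
    (∀ n : ℕ, u ++ (List.replicate n v).flatten ∈ S) ∧
    ∃ N : ℕ, ∀ n ≥ N, u ∈ Pref (sub S π {ev π u * (ev π v) ^ n * (ev π u)⁻¹})

/-- An Ã-automaton with state type `Q`, initial state `start`, terminal states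
`accept` and edge set `edges`. -/
structure Automaton (β : Type) (Q : Type) where
  start : Q
  accept : Set Q
  edges : Set (Q × β × Q)

namespace Automaton

variable {β Q : Type}

/-- `M.Path p w q`: there is a path from `p` to `q` labelled `w`. -/
inductive Path (M : Automaton β Q) : Q → List β → Q → Prop
  | nil (q : Q) : Path M q [] q
  | cons {p q r : Q} {a : β} {w : List β} :
      (p, a, q) ∈ M.edges → Path M q w r → Path M p (a :: w) r

/-- The language recognized by an automaton. -/
def lang (M : Automaton β Q) : Language β :=
  {w | ∃ t ∈ M.accept, M.Path M.start w t}

/-- A trim automaton: every state lies on some successful path. -/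
def Trim (M : Automaton β Q) : Prop :=
  ∀ q : Q, ∃ (u v : List β) (t : Q), t ∈ M.accept ∧ M.Path M.start u q ∧ M.Path q v t

/-- An involutive Ã-automaton. -/
def Involutive {α : Type} (M : Automaton (α × Bool) Q) : Prop :=
  ∀ p a q, (p, a, q) ∈ M.edges → (q, letterInv a, p) ∈ M.edges

/-- A deterministic automaton. -/
def Deterministic (M : Automaton β Q) : Prop :=
  ∀ p a q q', (p, a, q) ∈ M.edges → (p, a, q') ∈ M.edges → q = q'

/-- An inverse automaton: involutive, deterministic, trim, with a single
terminal state. -/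
def IsInverse {α : Type} (M : Automaton (α × Bool) Q) : Prop :=
  M.Involutive ∧ M.Deterministic ∧ M.Trim ∧ ∃ t : Q, M.accept = {t}

/-- The automaton obtained by identifying the states `p` and `q` (the quotient is
realized on the same state type, redirecting `q` to `p`). -/
def merge [DecidableEq Q] (M : Automaton β Q) (p q : Q) : Automaton β Q :=
  let f : Q → Q := fun x => if x = q then p else x
  { start := f M.start
    accept := f '' M.accept
    edges := {e | ∃ e' ∈ M.edges, e = (f e'.1, e'.2.1, f e'.2.2)} }

end Automaton

end Stallings

/-! ### Thin and optimal cuts of a graph -/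

namespace Cuts

section Uncrossing

variable {X Ed : Type*} (s t : Ed → X)

/-- The edge boundary of a set `A` of vertices: the edges with exactly one end in `A`. -/
def bd (A : Set X) : Set Ed := {e | ¬ (s e ∈ A ↔ t e ∈ A)}

/-- The Boolean algebra of subsets generated by a family of sets. -/
inductive Gen (𝒮 : Set (Set X)) : Set X → Prop
  | basic {A : Set X} : A ∈ 𝒮 → Gen 𝒮 A
  | empty : Gen 𝒮 ∅
  | compl {A : Set X} : Gen 𝒮 A → Gen 𝒮 Aᶜ
  | inter {A B : Set X} : Gen 𝒮 A → Gen 𝒮 B → Gen 𝒮 (A ∩ B)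

/-- A connected graph, in terms of cuts: any two vertices are on the same side of every cut
avoiding a suitable finite set of edges (the edges of a path between them). -/
def Conn : Prop := ∀ x y : X, ∃ F : Set Ed, F.Finite ∧
  ∀ B : Set X, Disjoint (bd s t B) F → (x ∈ B ↔ y ∈ B)

/-- The cuts with fewer than `n` boundary edges. -/
def Small (n : ℕ) : Set (Set X) := {B | (bd s t B).Finite ∧ (bd s t B).ncard < n}

/-- The thin cuts with at most `k` boundary edges: those which are not Boolean combinations of
cuts with smaller boundary. -/
def Thin (k : ℕ) : Set (Set X) :=
  {A | (bd s t A).Finite ∧ (bd s t A).ncard ≤ k ∧ ¬ Gen (Small s t (bd s t A).ncard) A}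

/-- Two sets cross if all four corners are nonempty. -/
def Crosses (A B : Set X) : Prop :=
  (A ∩ B).Nonempty ∧ (A ∩ Bᶜ).Nonempty ∧ (Aᶜ ∩ B).Nonempty ∧ (Aᶜ ∩ Bᶜ).Nonempty

/-- The thin cuts crossing `A`. -/
def Cr (k : ℕ) (A : Set X) : Set (Set X) := {B ∈ Thin s t k | Crosses B A}

/-- The cuts of lower complexity than `A`, complexity being the size of the boundary first, and
the number of thin cuts crossed second. -/
def Lower (k : ℕ) (A : Set X) : Set (Set X) :=
  Small s t (bd s t A).ncard ∪
    {B ∈ Thin s t k | (bd s t B).ncard = (bd s t A).ncard ∧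
      (Cr s t k B).ncard < (Cr s t k A).ncard}

/-- The optimal cuts: the thin cuts that are not Boolean combinations of cuts of lower
complexity. -/
def Opt (k : ℕ) : Set (Set X) := {A ∈ Thin s t k | ¬ Gen (Lower s t k A) A}

variable {s t}

lemma Gen.union {𝒮 : Set (Set X)} {A B : Set X} (hA : Gen 𝒮 A) (hB : Gen 𝒮 B) :
    Gen 𝒮 (A ∪ B) := by
  have := (hA.compl.inter hB.compl).compl
  rwa [Set.compl_inter, compl_compl, compl_compl] at this

lemma Gen.univ {𝒮 : Set (Set X)} : Gen 𝒮 Set.univ := by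
  have := (Gen.empty (𝒮 := 𝒮)).compl
  rwa [Set.compl_empty] at this

lemma Gen.of_compl {𝒮 : Set (Set X)} {A : Set X} (h : Gen 𝒮 Aᶜ) : Gen 𝒮 A := by
  simpa using h.compl

lemma Gen.symmDiff {𝒮 : Set (Set X)} {A B : Set X} (hA : Gen 𝒮 A) (hB : Gen 𝒮 B) :
    Gen 𝒮 (symmDiff A B) := by
  rw [Set.symmDiff_def, Set.sdiff_eq, Set.sdiff_eq]
  exact (hA.inter hB.compl).union (hB.inter hA.compl)

lemma Gen.trans {𝒮 𝒯 : Set (Set X)} (h : ∀ A ∈ 𝒮, Gen 𝒯 A) {A : Set X} (hA : Gen 𝒮 A) :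
    Gen 𝒯 A := by
  induction hA with
  | basic h' => exact h _ h'
  | empty => exact Gen.empty
  | compl _ ih => exact ih.compl
  | inter _ _ ih1 ih2 => exact ih1.inter ih2

lemma Gen.mono {𝒮 𝒯 : Set (Set X)} (h : 𝒮 ⊆ 𝒯) {A : Set X} (hA : Gen 𝒮 A) : Gen 𝒯 A :=
  hA.trans fun _ hB => Gen.basic (h hB)

/-- A Boolean combination involves only finitely many generators. -/
lemma Gen.exists_finite {𝒮 : Set (Set X)} {A : Set X} (hA : Gen 𝒮 A) :
    ∃ 𝒯 ⊆ 𝒮, 𝒯.Finite ∧ Gen 𝒯 A := by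
  induction hA with
  | @basic A h => exact ⟨{A}, by simpa using h, Set.finite_singleton _, Gen.basic rfl⟩
  | empty => exact ⟨∅, by simp, Set.finite_empty, Gen.empty⟩
  | compl _ ih => obtain ⟨T, h1, h2, h3⟩ := ih; exact ⟨T, h1, h2, h3.compl⟩
  | inter _ _ ih1 ih2 =>
    obtain ⟨T, h1, h2, h3⟩ := ih1
    obtain ⟨T', h1', h2', h3'⟩ := ih2
    exact ⟨T ∪ T', Set.union_subset h1 h1', h2.union h2',
      (h3.mono Set.subset_union_left).inter (h3'.mono Set.subset_union_right)⟩

/-- If a Boolean combination separates two points, so does one of the generators. -/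
lemma Gen.exists_separating {𝒮 : Set (Set X)} {A : Set X} (hA : Gen 𝒮 A) {x y : X}
    (hxy : ¬ (x ∈ A ↔ y ∈ A)) : ∃ B ∈ 𝒮, ¬ (x ∈ B ↔ y ∈ B) := by
  by_contra! hcon
  apply hxy
  clear hxy
  induction hA with
  | basic h => exact hcon _ h
  | empty => simp
  | compl _ ih => simp [ih]
  | inter _ _ ih1 ih2 => simp [ih1, ih2]

lemma mem_bd {A : Set X} {e : Ed} : e ∈ bd s t A ↔ ¬ (s e ∈ A ↔ t e ∈ A) := Iff.rfl

@[simp] lemma bd_compl (A : Set X) : bd s t Aᶜ = bd s t A := by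
  ext e; simp only [mem_bd, Set.mem_compl_iff]; tauto

lemma bd_symmDiff (A B : Set X) : bd s t (symmDiff A B) = symmDiff (bd s t A) (bd s t B) := by
  ext e; simp only [mem_bd, Set.mem_symmDiff]; tauto

lemma eq_empty_or_univ (hc : Conn s t) {A : Set X} (h : bd s t A = ∅) : A = ∅ ∨ A = Set.univ := by
  rcases A.eq_empty_or_nonempty with h' | ⟨x, hx⟩
  · exact Or.inl h'
  · right
    ext y
    obtain ⟨F, -, hF⟩ := hc x y
    simp [← hF A (by simp [h]), hx]

/-- A cut is determined by its boundary, up to exchanging its two sides. -/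
lemma eq_or_compl_of_bd_eq (hc : Conn s t) {A B : Set X} (h : bd s t A = bd s t B) :
    A = B ∨ A = Bᶜ := by
  have : bd s t (symmDiff A B) = ∅ := by rw [bd_symmDiff, h, symmDiff_self]; rfl
  rcases eq_empty_or_univ hc this with h | h
  · left
    exact symmDiff_eq_bot.1 h
  · right
    ext x
    have : x ∈ symmDiff A B := by rw [h]; trivial
    rw [Set.mem_symmDiff] at this
    simp only [Set.mem_compl_iff]; tauto

lemma small_compl {n : ℕ} {A : Set X} : Aᶜ ∈ Small s t n ↔ A ∈ Small s t n := by
  simp [Small]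

lemma small_mono {m n : ℕ} (h : m ≤ n) : Small s t m ⊆ (Small s t n : Set (Set X)) :=
  fun _ hB => ⟨hB.1, hB.2.trans_le h⟩

lemma thin_compl {k : ℕ} {A : Set X} : Aᶜ ∈ Thin s t k ↔ A ∈ Thin s t k := by
  simp only [Thin, Set.mem_ofPred_eq, bd_compl]
  exact and_congr_right fun _ => and_congr_right fun _ =>
    not_congr ⟨Gen.of_compl, Gen.compl⟩

lemma Crosses.symm {A B : Set X} (h : Crosses A B) : Crosses B A := by
  obtain ⟨h1, h2, h3, h4⟩ := h
  refine ⟨?_, ?_, ?_, ?_⟩ <;> rw [Set.inter_comm] <;> assumption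

lemma crosses_compl {A B : Set X} : Crosses A Bᶜ ↔ Crosses A B := by
  simp only [Crosses, compl_compl]; tauto

lemma cr_compl {k : ℕ} {A : Set X} : Cr s t k Aᶜ = Cr s t k A := by
  simp only [Cr, crosses_compl]

lemma lower_compl {k : ℕ} {A : Set X} : Lower s t k Aᶜ = Lower s t k A := by
  simp only [Lower, bd_compl, cr_compl]

lemma opt_compl {k : ℕ} {A : Set X} : Aᶜ ∈ Opt s t k ↔ A ∈ Opt s t k := by
  simp only [Opt, Set.mem_ofPred_eq, lower_compl, thin_compl]
  exact and_congr_right fun _ => not_congr ⟨Gen.of_compl, Gen.compl⟩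

/-- Only finitely many thin cuts contain a given edge in their boundary. Otherwise these cuts
accumulate (along an ultrafilter) at a cut `L` whose boundary is eventually a proper part of the
boundary of the cut `A`; then `A` is the symmetric difference of `L` and `A ∆ L`, which both have
a smaller boundary. -/
lemma thin_finite (hc : Conn s t) (k : ℕ) (e : Ed) :
    {A ∈ Thin s t k | e ∈ bd s t A}.Finite := by
  by_contra hinf
  set 𝒮 : Set (Set X) := {A ∈ Thin s t k | e ∈ bd s t A} with h𝒮
  have hne : (Filter.cofinite ⊓ Filter.principal 𝒮).NeBot :=
    Set.Infinite.cofinite_inf_principal_neBot hinf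
  obtain ⟨U, hU⟩ := Ultrafilter.exists_le (Filter.cofinite ⊓ Filter.principal 𝒮)
  have hU1 : ∀ᶠ A in U, A ∈ 𝒮 := (hU.trans inf_le_right) (Filter.mem_principal_self _)
  have hU2 : ∀ B : Set X, ∀ᶠ A in U, A ≠ B := fun B =>
    (hU.trans inf_le_left) (by simp)
  let L : Set X := {x | ∀ᶠ A : Set X in (U : Filter (Set X)), x ∈ A}
  have hL : ∀ e', e' ∈ bd s t L ↔ ∀ᶠ A in U, e' ∈ bd s t A := by
    intro e'
    simp only [mem_bd, L, Set.mem_ofPred_eq, Ultrafilter.eventually_not, iff_iff_and_or_not_and_not,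
      Ultrafilter.eventually_or, Filter.eventually_and]
  have hev : ∀ T : Set Ed, T.Finite → T ⊆ bd s t L → ∀ᶠ A in U, T ⊆ bd s t A := by
    intro T hT hTL
    have : ∀ᶠ A in U, ∀ e' ∈ T, e' ∈ bd s t A := by
      rw [Filter.eventually_all_finite hT]
      exact fun e' he' => (hL e').1 (hTL he')
    exact this
  have hfin : (bd s t L).Finite := by
    by_contra hinf'
    obtain ⟨T, hT, hcard⟩ := Set.Infinite.exists_subset_card_eq hinf' (k + 1)
    obtain ⟨A, hA, hA'⟩ := (hU1.and (hev T T.finite_toSet hT)).exists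
    have h1 := Set.ncard_le_ncard hA' hA.1.1
    rw [Set.ncard_coe_finset] at h1
    have := hA.1.2.1
    omega
  obtain ⟨A, ⟨⟨⟨hA1, hA2, hA3⟩, heA⟩, hLA⟩, hne1, hne2⟩ :=
    ((hU1.and (hev _ hfin subset_rfl)).and ((hU2 L).and (hU2 Lᶜ))).exists
  have hss : bd s t L ⊂ bd s t A := by
    refine hLA.ssubset_of_ne fun h => ?_
    rcases eq_or_compl_of_bd_eq hc h.symm with h | h
    exacts [hne1 h, hne2 h]
  have heL : e ∈ bd s t L := (hL e).2 (hU1.mono fun _ h => h.2)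
  have hsd : bd s t (symmDiff A L) = bd s t A \ bd s t L := by
    rw [bd_symmDiff, symmDiff_of_ge hLA]
  have hlt : (bd s t (symmDiff A L)).ncard < (bd s t A).ncard := by
    rw [hsd]
    exact Set.ncard_lt_ncard ⟨Set.sdiff_subset, fun h => (h heA).2 heL⟩ hA1
  apply hA3
  have h1 : Gen (Small s t (bd s t A).ncard) L :=
    Gen.basic ⟨hfin, Set.ncard_lt_ncard hss hA1⟩
  have h2 : Gen (Small s t (bd s t A).ncard) (symmDiff A L) :=
    Gen.basic ⟨hsd ▸ hA1.subset Set.sdiff_subset, hlt⟩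
  simpa [symmDiff_assoc] using h2.symmDiff h1

/-- Finitely many vertices are on the same side of every cut avoiding some finite set of edges. -/
lemma exists_finite_edges (hc : Conn s t) {W : Set X} (hW : W.Finite) :
    ∃ F : Set Ed, F.Finite ∧ ∀ B : Set X, Disjoint (bd s t B) F → W ⊆ B ∨ W ⊆ Bᶜ := by
  rcases W.eq_empty_or_nonempty with rfl | ⟨x, hx⟩
  · exact ⟨∅, Set.finite_empty, by simp⟩
  choose F hF hF' using hc x
  refine ⟨⋃ y ∈ W, F y, hW.biUnion fun y _ => hF y, fun B hB => ?_⟩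
  have key : ∀ y ∈ W, (x ∈ B ↔ y ∈ B) := fun y hy =>
    hF' y B (hB.mono_right (Set.subset_biUnion_of_mem hy))
  by_cases hxB : x ∈ B
  · exact Or.inl fun y hy => (key y hy).1 hxB
  · exact Or.inr fun y hy h => hxB ((key y hy).2 h)

/-- If the ends of the boundary edges of `A` are outside `B`, then `A` splits `B` without using
new boundary edges; so `B` is not thin unless one of the parts is empty. -/
lemma not_crosses_of_ends (hc : Conn s t) {k : ℕ} {A B : Set X} (hB : B ∈ Thin s t k)
    (hA : (bd s t A).Nonempty) (h : ∀ e ∈ bd s t A, s e ∉ B ∧ t e ∉ B) : ¬ Crosses B A := by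
  rintro ⟨h1, h2, -, -⟩
  obtain ⟨e0, he0⟩ := hA
  have hne : ∀ C : Set X, (B ∩ C).Nonempty → (bd s t (B ∩ C)).Nonempty := by
    intro C hC
    rw [Set.nonempty_iff_ne_empty]
    intro hb
    rcases eq_empty_or_univ hc hb with h' | h'
    · exact hC.ne_empty h'
    · have : s e0 ∈ B ∩ C := h' ▸ trivial
      exact (h e0 he0).1 this.1
  have hsub1 : bd s t (B ∩ A) ⊆ bd s t B := by
    intro e he
    have := h e
    simp only [mem_bd, Set.mem_inter_iff] at he this ⊢
    tauto
  have hsub2 : bd s t (B ∩ Aᶜ) ⊆ bd s t B := by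
    intro e he
    have := h e
    simp only [mem_bd, Set.mem_inter_iff, Set.mem_compl_iff] at he this ⊢
    tauto
  have hdis : ∀ e, e ∈ bd s t (B ∩ A) → e ∈ bd s t (B ∩ Aᶜ) → False := by
    intro e h1 h2
    have := h e
    simp only [mem_bd, Set.mem_inter_iff, Set.mem_compl_iff] at h1 h2 this
    tauto
  apply hB.2.2
  have e1 : Gen (Small s t (bd s t B).ncard) (B ∩ A) := by
    obtain ⟨e, he⟩ := hne _ h2
    exact Gen.basic ⟨hB.1.subset hsub1, Set.ncard_lt_ncard
      ⟨hsub1, fun hh => hdis e (hh (hsub2 he)) he⟩ hB.1⟩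
  have e2 : Gen (Small s t (bd s t B).ncard) (B ∩ Aᶜ) := by
    obtain ⟨e, he⟩ := hne _ h1
    exact Gen.basic ⟨hB.1.subset hsub2, Set.ncard_lt_ncard
      ⟨hsub2, fun hh => hdis e he (hh (hsub1 he))⟩ hB.1⟩
  have := e1.union e2
  rwa [Set.inter_union_compl] at this

lemma bd_nonempty_of_thin (hc : Conn s t) {k : ℕ} {A : Set X} (hA : A ∈ Thin s t k) :
    (bd s t A).Nonempty := by
  rw [Set.nonempty_iff_ne_empty]
  intro h
  rcases eq_empty_or_univ hc h with rfl | rfl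
  · exact hA.2.2 Gen.empty
  · exact hA.2.2 Gen.univ

lemma cr_finite (hc : Conn s t) {k : ℕ} {A : Set X} (hA : A ∈ Thin s t k) :
    (Cr s t k A).Finite := by
  obtain ⟨F, hF, hF'⟩ := exists_finite_edges hc ((hA.1.image s).union (hA.1.image t))
  refine (hF.biUnion fun e _ => thin_finite hc k e).subset ?_
  rintro B ⟨hB, hBA⟩
  by_contra hcon
  have hd : Disjoint (bd s t B) F := by
    rw [Set.disjoint_left]
    intro e he heF
    exact hcon (Set.mem_biUnion heF ⟨hB, he⟩)
  have hne := bd_nonempty_of_thin hc hA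
  rcases hF' B hd with h | h
  · refine not_crosses_of_ends hc (thin_compl.2 hB) hne (fun e he => ?_)
      (crosses_compl.2 hBA.symm).symm
    simp only [Set.mem_compl_iff, not_not]
    exact ⟨h (Or.inl ⟨e, he, rfl⟩), h (Or.inr ⟨e, he, rfl⟩)⟩
  · exact not_crosses_of_ends hc hB hne (fun e he =>
      ⟨h (Or.inl ⟨e, he, rfl⟩), h (Or.inr ⟨e, he, rfl⟩)⟩) hBA

/-- Submodularity of the size of the boundary, for two opposite corners. -/
lemma bd_corner_le {A B : Set X} (hA : (bd s t A).Finite) (hB : (bd s t B).Finite) :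
    (bd s t (A ∩ B)).ncard + (bd s t (Aᶜ ∩ Bᶜ)).ncard ≤ (bd s t A).ncard + (bd s t B).ncard := by
  have h1 : bd s t (A ∩ B) ∪ bd s t (Aᶜ ∩ Bᶜ) ⊆ bd s t A ∪ bd s t B := by
    intro e
    simp only [Set.mem_union, mem_bd, Set.mem_inter_iff, Set.mem_compl_iff]
    tauto
  have h2 : bd s t (A ∩ B) ∩ bd s t (Aᶜ ∩ Bᶜ) ⊆ bd s t A ∩ bd s t B := by
    intro e
    simp only [Set.mem_inter_iff, mem_bd, Set.mem_compl_iff]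
    tauto
  have hu := hA.union hB
  rw [← Set.ncard_union_add_ncard_inter _ _ hA hB, ← Set.ncard_union_add_ncard_inter _ _
    (hu.subset (Set.subset_union_left.trans h1)) (hu.subset (Set.subset_union_right.trans h1))]
  exact add_le_add (Set.ncard_le_ncard h1 hu)
    (Set.ncard_le_ncard h2 (hA.subset Set.inter_subset_left))

lemma bd_corner_finite {A B : Set X} (hA : (bd s t A).Finite) (hB : (bd s t B).Finite) :
    (bd s t (A ∩ B)).Finite := by
  refine (hA.union hB).subset fun e => ?_
  simp only [Set.mem_union, mem_bd, Set.mem_inter_iff]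
  tauto

lemma not_crosses_iff {A B : Set X} :
    ¬ Crosses A B ↔ A ⊆ Bᶜ ∨ A ⊆ B ∨ B ⊆ A ∨ Aᶜ ⊆ B := by
  simp only [Crosses, Set.not_nonempty_iff_eq_empty, not_and_or]
  refine or_congr ?_ (or_congr ?_ (or_congr ?_ ?_))
  all_goals
    simp only [Set.eq_empty_iff_forall_notMem, Set.subset_def, Set.mem_inter_iff,
      Set.mem_compl_iff]
    refine forall_congr' fun x => ?_
    tauto

/-- Strict submodularity of the number of crossings, for two opposite corners of a crossing pair
of thin cuts. -/
lemma cr_corner_lt (hc : Conn s t) {k : ℕ} {A B : Set X} (hA : A ∈ Thin s t k)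
    (hB : B ∈ Thin s t k) (hAB : Crosses A B) :
    (Cr s t k (A ∩ B)).ncard + (Cr s t k (Aᶜ ∩ Bᶜ)).ncard
      < (Cr s t k A).ncard + (Cr s t k B).ncard := by
  have hcorner : ∀ D : Set X, Crosses D (A ∩ B) ∨ Crosses D (Aᶜ ∩ Bᶜ) →
      Crosses D A ∨ Crosses D B := by
    intro D h
    contrapose! h
    obtain ⟨h1, h2⟩ := h
    obtain ⟨⟨a, ha⟩, ⟨b, hb⟩, ⟨c, hc⟩, ⟨d, hd⟩⟩ := hAB
    simp only [not_crosses_iff, Set.subset_def, Set.mem_inter_iff, Set.mem_compl_iff] at *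
    constructor
    · rcases h1 with h1 | h1 | h1 | h1 <;> rcases h2 with h2 | h2 | h2 | h2 <;> grind
    · rcases h1 with h1 | h1 | h1 | h1 <;> rcases h2 with h2 | h2 | h2 | h2 <;> grind
  have hcorner2 : ∀ D : Set X, Crosses D (A ∩ B) → Crosses D (Aᶜ ∩ Bᶜ) →
      Crosses D A ∧ Crosses D B := by
    intro D h1 h2
    constructor
    · by_contra h
      revert h1 h2
      simp only [imp_iff_not_or, not_crosses_iff, Set.subset_def, Set.mem_inter_iff,
        Set.mem_compl_iff] at *
      rcases h with h | h | h | h <;> grind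
    · by_contra h
      revert h1 h2
      simp only [imp_iff_not_or, not_crosses_iff, Set.subset_def, Set.mem_inter_iff,
        Set.mem_compl_iff] at *
      rcases h with h | h | h | h <;> grind
  have h1 : Cr s t k (A ∩ B) ∪ Cr s t k (Aᶜ ∩ Bᶜ) ⊂ Cr s t k A ∪ Cr s t k B := by
    refine ⟨?_, fun h => ?_⟩
    · rintro D (⟨hD, h⟩ | ⟨hD, h⟩)
      · exact (hcorner D (Or.inl h)).imp (⟨hD, ·⟩) (⟨hD, ·⟩)
      · exact (hcorner D (Or.inr h)).imp (⟨hD, ·⟩) (⟨hD, ·⟩)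
    · have : A ∈ Cr s t k A ∪ Cr s t k B := Or.inr ⟨hA, hAB⟩
      rcases h this with ⟨-, h⟩ | ⟨-, h⟩
      · obtain ⟨-, -, ⟨x, hx1, hx2⟩, -⟩ := h
        exact hx1 hx2.1
      · obtain ⟨⟨x, hx1, hx2⟩, -⟩ := h
        exact hx2.1 hx1
  have h2 : Cr s t k (A ∩ B) ∩ Cr s t k (Aᶜ ∩ Bᶜ) ⊆ Cr s t k A ∩ Cr s t k B := by
    rintro D ⟨⟨hD, h1⟩, ⟨-, h2⟩⟩
    exact ⟨⟨hD, (hcorner2 D h1 h2).1⟩, ⟨hD, (hcorner2 D h1 h2).2⟩⟩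
  have fA := cr_finite hc hA
  have fB := cr_finite hc hB
  have hu := fA.union fB
  rw [← Set.ncard_union_add_ncard_inter _ _ fA fB, ← Set.ncard_union_add_ncard_inter _ _
    (hu.subset (Set.subset_union_left.trans h1.1)) (hu.subset (Set.subset_union_right.trans h1.1))]
  exact add_lt_add_of_lt_of_le (Set.ncard_lt_ncard h1 hu)
    (Set.ncard_le_ncard h2 (fA.subset Set.inter_subset_left))

/-- Two opposite corners `A ∩ B` and `Aᶜ ∩ Bᶜ` of crossing thin cuts cannot both be as complex
as `A` and `B`, respectively. -/
lemma corner_absurd (hc : Conn s t) {k : ℕ} {A B : Set X} (hA : A ∈ Thin s t k)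
    (hB : B ∈ Thin s t k) (hAB : Crosses A B) (h1 : ¬ Gen (Lower s t k A) (A ∩ B))
    (h2 : ¬ Gen (Lower s t k B) (Aᶜ ∩ Bᶜ)) : False := by
  have key : ∀ {C D : Set X}, C ∈ Thin s t k → (bd s t D).Finite → ¬ Gen (Lower s t k C) D →
      (bd s t C).ncard ≤ (bd s t D).ncard ∧ ((bd s t D).ncard = (bd s t C).ncard →
        (Cr s t k C).ncard ≤ (Cr s t k D).ncard) := by
    intro C D hC hf h
    refine ⟨?_, fun heq => ?_⟩
    · by_contra! hlt
      exact h (Gen.basic (Or.inl ⟨hf, hlt⟩))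
    · by_contra! hlt
      refine h (Gen.basic (Or.inr ⟨⟨hf, heq ▸ hC.2.1, fun hg => h (hg.mono ?_)⟩, heq, hlt⟩))
      rw [heq]
      exact Set.subset_union_left
  have f1 := bd_corner_finite hA.1 hB.1
  have f2 : (bd s t (Aᶜ ∩ Bᶜ)).Finite :=
    bd_corner_finite (by simpa using hA.1) (by simpa using hB.1)
  obtain ⟨a1, a2⟩ := key hA f1 h1
  obtain ⟨b1, b2⟩ := key hB f2 h2
  have := bd_corner_le hA.1 hB.1
  have := cr_corner_lt hc hA hB hAB
  have := a2 (by omega)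
  have := b2 (by omega)
  omega

/-- **Uncrossing**: the optimal cuts are pairwise nested. -/
theorem opt_nested (hc : Conn s t) {k : ℕ} {A B : Set X} (hA : A ∈ Opt s t k)
    (hB : B ∈ Opt s t k) : ¬ Crosses A B := by
  -- the conclusion for opposite corners, for an arbitrary choice of the sides of `A` and `B`
  have key : ∀ A' B' : Set X, (A' = A ∨ A' = Aᶜ) → (B' = B ∨ B' = Bᶜ) → Crosses A B →
      Gen (Lower s t k A) (A' ∩ B') ∨ Gen (Lower s t k B) (A'ᶜ ∩ B'ᶜ) := by
    intro A' B' hA' hB' hAB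
    by_contra! hcon
    have e1 : Lower s t k A' = Lower s t k A := by
      rcases hA' with rfl | rfl
      exacts [rfl, lower_compl]
    have e2 : Lower s t k B' = Lower s t k B := by
      rcases hB' with rfl | rfl
      exacts [rfl, lower_compl]
    refine corner_absurd hc (k := k) (A := A') (B := B') ?_ ?_ ?_ (e1 ▸ hcon.1) (e2 ▸ hcon.2)
    · rcases hA' with rfl | rfl
      exacts [hA.1, thin_compl.2 hA.1]
    · rcases hB' with rfl | rfl
      exacts [hB.1, thin_compl.2 hB.1]
    · obtain ⟨h1, h2, h3, h4⟩ := hAB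
      rcases hA' with rfl | rfl <;> rcases hB' with rfl | rfl <;>
        simp only [Crosses, compl_compl] <;> tauto
  intro hAB
  have k1 := key A B (Or.inl rfl) (Or.inl rfl) hAB
  have k2 := key A Bᶜ (Or.inl rfl) (Or.inr rfl) hAB
  have k3 := key Aᶜ B (Or.inr rfl) (Or.inl rfl) hAB
  have k4 := key Aᶜ Bᶜ (Or.inr rfl) (Or.inr rfl) hAB
  simp only [compl_compl] at k1 k2 k3 k4
  -- `A` and `B` are unions of two adjacent corners
  have split : ∀ (𝒮 : Set (Set X)) (C D : Set X), Gen 𝒮 (C ∩ D) → Gen 𝒮 (C ∩ Dᶜ) → Gen 𝒮 C := by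
    intro 𝒮 C D h1 h2
    have := h1.union h2
    rwa [Set.inter_union_compl] at this
  have nA := hA.2
  have nB := hB.2
  have a1 := split (Lower s t k A) A B
  have a2 := fun h1 h2 => (split (Lower s t k A) Aᶜ B h1 h2).of_compl
  have b1 := split (Lower s t k B) B A
  have b2 := fun h1 h2 => (split (Lower s t k B) Bᶜ A h1 h2).of_compl
  rw [Set.inter_comm B A, Set.inter_comm B Aᶜ] at b1
  rw [Set.inter_comm Bᶜ A, Set.inter_comm Bᶜ Aᶜ] at b2
  -- the cut of lower complexity generates less
  have hcmp : Lower s t k A ⊆ Lower s t k B ∨ Lower s t k B ⊆ Lower s t k A := by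
    have aux : ∀ C D : Set X, ((bd s t C).ncard < (bd s t D).ncard ∨
        ((bd s t C).ncard = (bd s t D).ncard ∧ (Cr s t k C).ncard ≤ (Cr s t k D).ncard)) →
        Lower s t k C ⊆ Lower s t k D := by
      rintro C D h E (hE | ⟨hE1, hE2, hE3⟩)
      · exact Or.inl (small_mono (by omega) hE)
      · rcases h with h | ⟨h, h'⟩
        · exact Or.inl ⟨hE1.1, by omega⟩
        · exact Or.inr ⟨hE1, by omega, by omega⟩
    rcases lt_trichotomy (bd s t A).ncard (bd s t B).ncard with h | h | h
    · exact Or.inl (aux _ _ (Or.inl h))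
    · rcases le_total (Cr s t k A).ncard (Cr s t k B).ncard with h' | h'
      · exact Or.inl (aux _ _ (Or.inr ⟨h, h'⟩))
      · exact Or.inr (aux _ _ (Or.inr ⟨h.symm, h'⟩))
    · exact Or.inr (aux _ _ (Or.inl h))
  rcases hcmp with h | h
  · have m1 := Gen.mono h (A := A ∩ B)
    have m2 := Gen.mono h (A := A ∩ Bᶜ)
    have m3 := Gen.mono h (A := Aᶜ ∩ B)
    have m4 := Gen.mono h (A := Aᶜ ∩ Bᶜ)
    clear hAB key split h hA hB
    rcases k1 with k1 | k1 <;> rcases k2 with k2 | k2 <;> rcases k3 with k3 | k3 <;>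
      rcases k4 with k4 | k4 <;> first
        | exact nA (a1 (by first | assumption | exact m1 ‹_›) (by assumption))
        | exact nA (a2 (by assumption) (by assumption))
        | exact nB (b1 (by first | assumption | exact m1 ‹_›) (by first | assumption | exact m3 ‹_›))
        | exact nB (b2 (by assumption) (by assumption))
  · have m1 := Gen.mono h (A := A ∩ B)
    have m2 := Gen.mono h (A := A ∩ Bᶜ)
    have m3 := Gen.mono h (A := Aᶜ ∩ B)
    have m4 := Gen.mono h (A := Aᶜ ∩ Bᶜ)
    clear hAB key split h hA hB
    rcases k1 with k1 | k1 <;> rcases k2 with k2 | k2 <;> rcases k3 with k3 | k3 <;>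
      rcases k4 with k4 | k4 <;> first
        | exact nA (a1 (by first | assumption | exact m1 ‹_›) (by first | assumption | exact m2 ‹_›))
        | exact nA (a2 (by first | assumption | exact m3 ‹_›) (by first | assumption | exact m4 ‹_›))
        | exact nB (b1 (by assumption) (by assumption))
        | exact nB (b2 (by assumption) (by assumption))

/-- Every cut with at most `k` boundary edges is a Boolean combination of optimal cuts. -/
theorem gen_opt {k : ℕ} {A : Set X} (hA : (bd s t A).Finite)
    (hk : (bd s t A).ncard ≤ k) : Gen (Opt s t k) A := by
  induction hn : (bd s t A).ncard using Nat.strong_induction_on generalizing A with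
  | _ n ih =>
  subst hn
  have hsmall : ∀ B ∈ Small s t (bd s t A).ncard, Gen (Opt s t k) B := fun B hB =>
    ih _ hB.2 hB.1 (hB.2.le.trans hk) rfl
  by_cases hT : A ∈ Thin s t k
  swap
  · have : Gen (Small s t (bd s t A).ncard) A := by
      by_contra h
      exact hT ⟨hA, hk, h⟩
    exact this.trans hsmall
  clear hA hk
  induction hm : (Cr s t k A).ncard using Nat.strong_induction_on generalizing A with
  | _ m ih2 =>
  subst hm
  by_cases hO : A ∈ Opt s t k
  · exact Gen.basic hO
  have : Gen (Lower s t k A) A := by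
    by_contra h
    exact hO ⟨hT, h⟩
  refine this.trans ?_
  rintro B (hB | ⟨hB1, hB2, hB3⟩)
  · exact hsmall B hB
  · exact ih2 _ hB3 (hB2 ▸ ih) (hB2 ▸ hsmall) hB1 rfl

/-! Invariance under automorphisms of the graph. -/

lemma gen_preimage (f : X ≃ X) {𝒮 𝒯 : Set (Set X)} (h : ∀ B ∈ 𝒮, f ⁻¹' B ∈ 𝒯) {A : Set X}
    (hA : Gen 𝒮 A) : Gen 𝒯 (f ⁻¹' A) := by
  induction hA with
  | basic h' => exact Gen.basic (h _ h')
  | empty => exact Gen.empty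
  | compl _ ih => exact ih.compl
  | inter _ _ ih1 ih2 => exact ih1.inter ih2

lemma crosses_preimage (f : X ≃ X) {A B : Set X} : Crosses (f ⁻¹' A) (f ⁻¹' B) ↔ Crosses A B := by
  simp only [Crosses, ← Set.preimage_compl, ← Set.preimage_inter,
    f.surjective.nonempty_preimage]

/-- An automorphism of the graph with vertex map `f` and edge map `φ`. -/
structure IsAut (s t : Ed → X) (f : X ≃ X) (φ : Ed ≃ Ed) : Prop where
  src : ∀ e, s (φ e) = f (s e)
  tgt : ∀ e, t (φ e) = f (t e)

lemma IsAut.symm {f : X ≃ X} {φ : Ed ≃ Ed} (h : IsAut s t f φ) : IsAut s t f.symm φ.symm :=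
  ⟨fun e => by rw [Equiv.eq_symm_apply, ← h.src, Equiv.apply_symm_apply],
   fun e => by rw [Equiv.eq_symm_apply, ← h.tgt, Equiv.apply_symm_apply]⟩

lemma IsAut.bd_preimage {f : X ≃ X} {φ : Ed ≃ Ed} (h : IsAut s t f φ) (A : Set X) :
    bd s t (f ⁻¹' A) = φ ⁻¹' (bd s t A) := by
  ext e; simp [mem_bd, h.src, h.tgt]

lemma IsAut.ncard_bd {f : X ≃ X} {φ : Ed ≃ Ed} (h : IsAut s t f φ) (A : Set X) :
    (bd s t (f ⁻¹' A)).ncard = (bd s t A).ncard := by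
  rw [h.bd_preimage]
  exact Set.ncard_preimage_of_injective_subset_range φ.injective (by simp)

lemma IsAut.small {f : X ≃ X} {φ : Ed ≃ Ed} (h : IsAut s t f φ) {n : ℕ} {A : Set X}
    (hA : A ∈ Small s t n) : f ⁻¹' A ∈ Small s t n :=
  ⟨by rw [h.bd_preimage]; exact hA.1.preimage φ.injective.injOn, by rw [h.ncard_bd]; exact hA.2⟩

lemma IsAut.thin {f : X ≃ X} {φ : Ed ≃ Ed} (h : IsAut s t f φ) {k : ℕ} {A : Set X}
    (hA : A ∈ Thin s t k) : f ⁻¹' A ∈ Thin s t k := by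
  refine ⟨by rw [h.bd_preimage]; exact hA.1.preimage φ.injective.injOn,
    by rw [h.ncard_bd]; exact hA.2.1, ?_⟩
  rw [h.ncard_bd]
  intro hg
  have := gen_preimage f.symm (fun _ => h.symm.small) hg
  rw [← Set.preimage_comp] at this
  simp only [Equiv.self_comp_symm, Set.preimage_id] at this
  exact hA.2.2 this

lemma IsAut.cr_subset {f : X ≃ X} {φ : Ed ≃ Ed} (h : IsAut s t f φ) {k : ℕ} (A : Set X) :
    Set.preimage f '' Cr s t k A ⊆ Cr s t k (f ⁻¹' A) := by
  rintro _ ⟨B, hB, rfl⟩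
  exact ⟨h.thin hB.1, (crosses_preimage f).2 hB.2⟩

lemma IsAut.ncard_cr {f : X ≃ X} {φ : Ed ≃ Ed} (h : IsAut s t f φ) {k : ℕ} (A : Set X) :
    (Cr s t k (f ⁻¹' A)).ncard = (Cr s t k A).ncard := by
  have inj : Function.Injective (Set.preimage f : Set X → Set X) :=
    f.surjective.preimage_injective
  have : Cr s t k (f ⁻¹' A) = Set.preimage f '' Cr s t k A := by
    refine Set.Subset.antisymm (fun B hB => ?_) (h.cr_subset A)
    have := h.symm.cr_subset (f ⁻¹' A) ⟨B, hB, rfl⟩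
    rw [← Set.preimage_comp] at this
    simp only [Equiv.self_comp_symm, Set.preimage_id] at this
    refine ⟨_, this, ?_⟩
    rw [← Set.preimage_comp]
    simp
  rw [this, Set.ncard_image_of_injective _ inj]

lemma IsAut.opt {f : X ≃ X} {φ : Ed ≃ Ed} (h : IsAut s t f φ) {k : ℕ} {A : Set X}
    (hA : A ∈ Opt s t k) : f ⁻¹' A ∈ Opt s t k := by
  refine ⟨h.thin hA.1, fun hg => hA.2 ?_⟩
  have := gen_preimage f.symm (𝒯 := Lower s t k A) ?_ hg
  · rw [← Set.preimage_comp] at this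
    simpa only [Equiv.self_comp_symm, Set.preimage_id] using this
  · rintro B (hB | ⟨hB1, hB2, hB3⟩)
    · rw [h.ncard_bd] at hB
      exact Or.inl (h.symm.small hB)
    · rw [h.ncard_bd] at hB2
      rw [h.ncard_cr] at hB3
      exact Or.inr ⟨h.symm.thin hB1, by rw [h.symm.ncard_bd, hB2], by rwa [h.symm.ncard_cr]⟩

end Uncrossing

end Cuts

/-! ### Groups acting on trees with finite stabilizers -/

namespace TreeAction

/-- A group action on `Y` (given by `ρ`, on a subgroup `P`) is multiplicative and free. -/
structure FreeOn {G Y : Type} [Group G] (P : Subgroup G) (ρ : G → Equiv.Perm Y) : Prop where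
  mul : ∀ g ∈ P, ∀ h ∈ P, ρ (g * h) = ρ g * ρ h
  free : ∀ g ∈ P, ∀ y, ρ g y = y → g = 1

section Permutations

variable {G : Type} [Group G]

lemma FreeOn.mono {Y : Type} {P P' : Subgroup G} {ρ : G → Equiv.Perm Y} (h : FreeOn P ρ)
    (hP : P' ≤ P) : FreeOn P' ρ :=
  ⟨fun g hg k hk => h.mul g (hP hg) k (hP hk), fun g hg => h.free g (hP hg)⟩

lemma FreeOn.one {Y : Type} {P : Subgroup G} {ρ : G → Equiv.Perm Y} (h : FreeOn P ρ) :
    ρ 1 = 1 := by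
  have := h.mul 1 P.one_mem 1 P.one_mem
  rw [mul_one] at this
  exact left_eq_mul.1 this

lemma exists_freeOn (P : Subgroup G) [Finite P] {m : ℕ} (hm : Nat.card P ∣ m) :
    ∃ ρ : G → Equiv.Perm (Fin m), FreeOn P ρ := by
  classical
  obtain ⟨k, rfl⟩ := hm
  let e : P × Fin k ≃ Fin (Nat.card P * k) :=
    ((Finite.equivFin P).prodCongr (Equiv.refl _)).trans finProdFinEquiv
  refine ⟨fun g => if hg : g ∈ P then
    (e.symm.trans ((Equiv.mulLeft (⟨g, hg⟩ : P)).prodCongr (Equiv.refl _))).trans e else 1, ?_, ?_⟩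
  · intro g hg h hh
    rw [dif_pos hg, dif_pos hh, dif_pos (P.mul_mem hg hh)]
    ext y
    simp only [Equiv.trans_apply, Equiv.Perm.mul_apply, Equiv.symm_apply_apply,
      Equiv.prodCongr_apply, Prod.map, Equiv.coe_mulLeft, Equiv.refl_apply, ← mul_assoc,
      MulMemClass.mk_mul_mk]
  · intro g hg y hy
    rw [dif_pos hg] at hy
    obtain ⟨⟨h, i⟩, rfl⟩ := e.surjective y
    simp at hy
    exact hy

/-- A free action of a finite group on a finite set is a disjoint union of regular actions. -/
lemma FreeOn.exists_equiv {P : Subgroup G} [Finite P] {m : ℕ} {ρ : G → Equiv.Perm (Fin m)}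
    (h : FreeOn P ρ) : ∃ e : P × Fin (m / Nat.card P) ≃ Fin m,
      ∀ (g p : P) (i), e (g * p, i) = ρ g (e (p, i)) := by
  let hom : P →* Equiv.Perm (Fin m) :=
    { toFun := fun g => ρ g, map_one' := h.one, map_mul' := fun a b => h.mul a a.2 b b.2 }
  let _ : MulAction P (Fin m) := MulAction.compHom (Fin m) hom
  have hsmul : ∀ (g : P) (y : Fin m), g • y = ρ g y := fun _ _ => rfl
  let Q := MulAction.orbitRel.Quotient P (Fin m)
  have hbij : Function.Bijective (fun x : P × Q => x.1 • (Quotient.out x.2 : Fin m)) := by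
    constructor
    · rintro ⟨g, q⟩ ⟨g', q'⟩ hgq
      simp only at hgq
      have hq : q = q' := by
        have := congrArg (Quotient.mk (MulAction.orbitRel P (Fin m))) hgq
        have e1 : ∀ (g : P) (q : Q),
            Quotient.mk (MulAction.orbitRel P (Fin m)) (g • (Quotient.out q : Fin m)) = q := by
          intro g q
          conv_rhs => rw [← Quotient.out_eq q]
          exact Quotient.sound ⟨g, rfl⟩
        rwa [e1, e1] at this
      subst hq
      have : (g'⁻¹ * g) • (Quotient.out q : Fin m) = Quotient.out q := by
        rw [mul_smul, hgq, inv_smul_smul]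
      have := h.free _ (g'⁻¹ * g).2 _ this
      have : g'⁻¹ * g = 1 := Subtype.ext this
      rw [inv_mul_eq_one] at this
      rw [this]
    · intro y
      have : MulAction.orbitRel P (Fin m) y
          (Quotient.out (Quotient.mk (MulAction.orbitRel P (Fin m)) y)) :=
        Quotient.exact (Quotient.out_eq (Quotient.mk (MulAction.orbitRel P (Fin m)) y)).symm
      obtain ⟨g, hg⟩ := this
      exact ⟨(g, _), hg⟩
  let e0 : P × Q ≃ Fin m := Equiv.ofBijective _ hbij
  have hQ : Nat.card Q = m / Nat.card P := by
    have : Nat.card (P × Q) = m := by rw [Nat.card_congr e0]; simp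
    rw [Nat.card_prod] at this
    rw [← this, Nat.mul_div_cancel_left _ Nat.card_pos]
  have : Finite Q := Quotient.finite _
  let f : Fin (m / Nat.card P) ≃ Q := (finCongr hQ.symm).trans (Finite.equivFin Q).symm
  refine ⟨((Equiv.refl P).prodCongr f).trans e0, fun g p i => ?_⟩
  change (g * p) • (Quotient.out (f i) : Fin m) = g • (p • (Quotient.out (f i) : Fin m))
  rw [mul_smul]

/-- Two free actions of a finite group on the same finite set are isomorphic. -/
lemma FreeOn.exists_intertwiner {P : Subgroup G} [Finite P] {m : ℕ}
    {ρ ρ' : G → Equiv.Perm (Fin m)} (h : FreeOn P ρ) (h' : FreeOn P ρ') :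
    ∃ τ : Equiv.Perm (Fin m), ∀ g ∈ P, τ * ρ g = ρ' g * τ := by
  obtain ⟨e, he⟩ := h.exists_equiv
  obtain ⟨e', he'⟩ := h'.exists_equiv
  refine ⟨e.symm.trans e', fun g hg => ?_⟩
  ext y
  obtain ⟨⟨p, i⟩, rfl⟩ := e.surjective y
  have := he ⟨g, hg⟩ p i
  simp only [Equiv.Perm.mul_apply, Equiv.trans_apply, Equiv.symm_apply_apply]
  rw [← this]
  simp [he' ⟨g, hg⟩ p i]

/-- A choice of orbit representatives, and of group elements carrying them around. -/
lemma exists_orbit_reps (G W : Type) [Group G] [MulAction G W] :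
    ∃ (rep : W → W) (t : W → G), (∀ w, t w • rep w = w) ∧ ∀ (g : G) w, rep (g • w) = rep w := by
  have : ∀ w : W, ∃ g : G, g • (Quotient.out (Quotient.mk (MulAction.orbitRel G W) w)) = w := by
    intro w
    have : MulAction.orbitRel G W w (Quotient.out (Quotient.mk (MulAction.orbitRel G W) w)) :=
      Quotient.exact (Quotient.out_eq (Quotient.mk (MulAction.orbitRel G W) w)).symm
    exact this
  choose t ht using this
  refine ⟨_, t, ht, fun g w => ?_⟩
  congr 1
  exact Quotient.sound ⟨g, rfl⟩

end Permutations

section Cocycle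

variable {G V : Type} [Group G] [MulAction G V]

/-- A permutation-valued cocycle: a lift of the action of `G` on `V` to `V × Fin m`. -/
structure IsCocycle {m : ℕ} (c : G → V → Equiv.Perm (Fin m)) : Prop where
  mul : ∀ g h v, c (g * h) v = c g (h • v) * c h v
  free : ∀ g v y, g • v = v → c g v y = y → g = 1

lemma IsCocycle.one {m : ℕ} {c : G → V → Equiv.Perm (Fin m)} (hc : IsCocycle c) (v : V) :
    c 1 v = 1 := by
  have := hc.mul 1 1 v
  rw [mul_one, one_smul] at this
  exact left_eq_mul.1 this

/-- If the stabilizers are finite of order dividing `m`, there is a cocycle with values in the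
permutations of `m` points for which the stabilizers act freely. -/
lemma exists_cocycle {m : ℕ} (hf : ∀ v : V, Finite (MulAction.stabilizer G v))
    (hm : ∀ v : V, Nat.card (MulAction.stabilizer G v) ∣ m) :
    ∃ c : G → V → Equiv.Perm (Fin m), IsCocycle c := by
  obtain ⟨rep, t, ht, hrep⟩ := exists_orbit_reps G V
  choose ρ hρ using fun v : V => exists_freeOn (MulAction.stabilizer G v) (hm v)
  have hmem : ∀ g v, (t (g • v))⁻¹ * g * t v ∈ MulAction.stabilizer G (rep v) := by
    intro g v
    rw [MulAction.mem_stabilizer_iff, mul_smul, mul_smul, ht, inv_smul_eq_iff, ← hrep g v, ht]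
  refine ⟨fun g v => ρ (rep v) ((t (g • v))⁻¹ * g * t v), fun g h v => ?_, fun g v y hgv hy => ?_⟩
  · rw [hrep h v, ← (hρ (rep v)).mul _ _ _ (hmem h v)]
    · congr 1
      rw [mul_smul]
      group
    · have := hmem g (h • v)
      rwa [hrep h v] at this
  · have := (hρ (rep v)).free _ (hmem g v) y hy
    rw [hgv] at this
    have h2 : g = t v * ((t v)⁻¹ * g * t v) * (t v)⁻¹ := by group
    rw [h2, this]
    group

/-- Equivariant transport maps between the fibres of the lifted action. -/
lemma exists_transport {m : ℕ} (hf : ∀ v : V, Finite (MulAction.stabilizer G v))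
    {c : G → V → Equiv.Perm (Fin m)} (hc : IsCocycle c) :
    ∃ T : V × V → Equiv.Perm (Fin m), ∀ g p, T (g • p) * c g p.1 = c g p.2 * T p := by
  obtain ⟨rep, t, ht, hrep⟩ := exists_orbit_reps G (V × V)
  have hst : ∀ (p : V × V) (g : G), g ∈ MulAction.stabilizer G p ↔
      g • p.1 = p.1 ∧ g • p.2 = p.2 := by
    intro p g
    rw [MulAction.mem_stabilizer_iff, Prod.ext_iff]
    rfl
  have hle : ∀ p : V × V, MulAction.stabilizer G p ≤ MulAction.stabilizer G p.1 :=
    fun p g hg => ((hst p g).1 hg).1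
  have hT0 : ∀ p : V × V, ∃ τ : Equiv.Perm (Fin m), ∀ g ∈ MulAction.stabilizer G p,
      τ * c g p.1 = c g p.2 * τ := by
    intro p
    have := hf p.1
    have : Finite (MulAction.stabilizer G p) :=
      Finite.of_injective _ (Subgroup.inclusion_injective (hle p))
    refine FreeOn.exists_intertwiner (P := MulAction.stabilizer G p)
      (ρ := fun g => c g p.1) (ρ' := fun g => c g p.2) ⟨?_, ?_⟩ ⟨?_, ?_⟩
    · intro g _ h hh
      simp only [hc.mul g h, ((hst p h).1 hh).1]
    · intro g hg y
      exact hc.free g _ y ((hst p g).1 hg).1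
    · intro g _ h hh
      simp only [hc.mul g h, ((hst p h).1 hh).2]
    · intro g hg y
      exact hc.free g _ y ((hst p g).1 hg).2
  choose T0 hT0 using hT0
  refine ⟨fun p => c (t p) (rep p).2 * T0 (rep p) * (c (t p) (rep p).1)⁻¹, fun g p => ?_⟩
  have hs : (t p)⁻¹ * g⁻¹ * t (g • p) ∈ MulAction.stabilizer G (rep p) := by
    rw [MulAction.mem_stabilizer_iff, mul_smul, mul_smul, ← hrep g p, ht, inv_smul_smul,
      inv_smul_eq_iff, hrep, ht]
  set s := (t p)⁻¹ * g⁻¹ * t (g • p) with hsdef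
  have hts : t (g • p) = g * (t p * s) := by rw [hsdef]; group
  obtain ⟨h1, h2⟩ := (hst _ _).1 hs
  have e1 : t p • (rep p).1 = p.1 := congrArg Prod.fst (ht p)
  have e2 : t p • (rep p).2 = p.2 := congrArg Prod.snd (ht p)
  have key := hT0 _ s hs
  simp only [hrep g p, hts, hc.mul, mul_smul, h1, h2, e1, e2]
  have key' : T0 (rep p) = c s (rep p).2 * T0 (rep p) * (c s (rep p).1)⁻¹ := by
    rw [← key]; group
  conv_rhs => rw [key']
  group

end Cocycle

/-- A tree with vertex set `V`, encoded by an adjacency relation and by the distance `r` to a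
root `v0`: every vertex other than the root has exactly one neighbour nearer to the root. -/
structure IsRootedTree {V : Type} (Adj : V → V → Prop) (r : V → ℕ) (v0 : V) : Prop where
  symm : ∀ v w, Adj v w → Adj w v
  root : ∀ v, r v = 0 ↔ v = v0
  rank_ne : ∀ v w, Adj v w → r v ≠ r w
  parent_unique : ∀ v w w', Adj v w → Adj v w' → r w < r v → r w' < r v → w = w'
  exists_parent : ∀ v, r v ≠ 0 → ∃ w, Adj v w ∧ r w < r v

namespace IsRootedTree

variable {V : Type} {Adj : V → V → Prop} {r : V → ℕ} {v0 : V}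

/-- Connectedness. -/
lemma induct (h : IsRootedTree Adj r v0) {P : V → Prop} (h0 : P v0)
    (hP : ∀ v w, Adj v w → P w → P v) (v : V) : P v := by
  induction hn : r v using Nat.strong_induction_on generalizing v with
  | _ n ih =>
  subst hn
  by_cases hv : r v = 0
  · rwa [(h.root v).1 hv]
  · obtain ⟨w, hw, hlt⟩ := h.exists_parent v hv
    exact hP v w hw (ih _ hlt w rfl)

open Classical in
/-- The neighbour of `v` nearer to the root (junk value `v` at the root). -/
noncomputable def parent (_ : IsRootedTree Adj r v0) (v : V) : V :=
  if h : ∃ w, Adj v w ∧ r w < r v then h.choose else v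

lemma parent_spec (h : IsRootedTree Adj r v0) {v : V} (hv : r v ≠ 0) :
    Adj v (h.parent v) ∧ r (h.parent v) < r v := by
  have := h.exists_parent v hv
  rw [parent, dif_pos this]
  exact this.choose_spec

lemma eq_parent (h : IsRootedTree Adj r v0) {v w : V} (hvw : Adj v w) (hlt : r w < r v) :
    w = h.parent v := by
  obtain ⟨h1, h2⟩ := h.parent_spec (v := v) (by omega)
  exact h.parent_unique v _ _ hvw h1 hlt h2

/-- The flat section with value `y0` at the root, for a transport `T` along the edges. -/
noncomputable def sec (h : IsRootedTree Adj r v0) {Y : Type} (T : V → V → Y → Y) (y0 : Y)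
    (v : V) : Y :=
  if hv : r v = 0 then y0 else
    have := (h.parent_spec hv).2
    T (h.parent v) v (h.sec T y0 (h.parent v))
termination_by r v

/-- Flat sections exist since a tree has no cycles. -/
lemma exists_section (h : IsRootedTree Adj r v0) {Y : Type} (T : V → V → Y → Y)
    (hT : ∀ v w y, Adj v w → T w v (T v w y) = y) (y0 : Y) :
    ∃ y : V → Y, y v0 = y0 ∧ ∀ v w, Adj v w → y w = T v w (y v) := by
  have key : ∀ v w, Adj v w → r w < r v → h.sec T y0 v = T w v (h.sec T y0 w) := by
    intro v w hvw hlt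
    rw [sec, dif_neg (by omega)]
    simp only [← h.eq_parent hvw hlt]
  refine ⟨h.sec T y0, ?_, fun v w hvw => ?_⟩
  · rw [sec, dif_pos ((h.root v0).2 rfl)]
  · rcases lt_or_gt_of_ne (h.rank_ne v w hvw) with hlt | hlt
    · exact key w v (h.symm _ _ hvw) hlt
    · rw [key v w hvw hlt, hT _ _ _ (h.symm _ _ hvw)]

end IsRootedTree

section Free

variable {K V : Type} [Group K] [MulAction K V] {Adj : V → V → Prop} {r : V → ℕ} {v0 : V}

open Classical in
/-- The letter labelling an oriented edge: its orbit, with an exponent recording the direction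
relative to a 2-colouring of the vertices. -/
noncomputable def letter (K : Type) [Group K] {V : Type} [MulAction K V] (color : V → Prop)
    (v w : V) : MulAction.orbitRel.Quotient K (V × V) × Bool :=
  if color v then (Quotient.mk _ (w, v), false) else (Quotient.mk _ (v, w), true)

/-- A group acting freely, and without inversions, on a tree is free: reading off the labels along
the path from the root to its translates is an embedding into a free group. -/
theorem isFreeGroup_of_free_action (h : IsRootedTree Adj r v0)
    (hAdj : ∀ (k : K) v w, Adj v w → Adj (k • v) (k • w)) (color : V → Prop)
    (hcol : ∀ (k : K) v, color (k • v) ↔ color v)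
    (hcol' : ∀ v w, Adj v w → (color v ↔ ¬ color w))
    (hfree : ∀ (k : K) (v : V), k • v = v → k = 1) : IsFreeGroup K := by
  classical
  let lab : V → V → FreeGroup (MulAction.orbitRel.Quotient K (V × V)) :=
    fun v w => FreeGroup.mk [letter K color v w]
  have hletter : ∀ (k : K) v w, letter K color (k • v) (k • w) = letter K color v w := by
    intro k v w
    have e : ∀ p : V × V, (Quotient.mk (MulAction.orbitRel K (V × V)) (k • p)) =
      Quotient.mk (MulAction.orbitRel K (V × V)) p := fun p => Quotient.sound ⟨k, rfl⟩
    simp only [letter, hcol]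
    rw [← e (w, v), ← e (v, w)]
    rfl
  have hlab : ∀ v w, Adj v w → lab v w * lab w v = 1 := by
    intro v w hvw
    have := hcol' v w hvw
    by_cases hv : color v
    · have hw := this.1 hv
      have e : lab v w = (lab w v)⁻¹ := by simp [lab, letter, hv, hw, FreeGroup.invRev]
      rw [e, inv_mul_cancel]
    · have hw : color w := by tauto
      have e : lab v w = (lab w v)⁻¹ := by simp [lab, letter, hv, hw, FreeGroup.invRev]
      rw [e, inv_mul_cancel]
  obtain ⟨φ, hφ0, hφ⟩ := h.exists_section (fun v w x => x * lab v w)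
    (fun v w x hvw => by rw [mul_assoc, hlab v w hvw, mul_one]) 1
  have hmul : ∀ (k : K) v, φ (k • v) = φ (k • v0) * φ v := by
    intro k v
    refine h.induct (P := fun v => φ (k • v) = φ (k • v0) * φ v) (by rw [hφ0, mul_one])
      (fun v w hvw ih => ?_) v
    rw [hφ _ _ (hAdj k _ _ (h.symm _ _ hvw)), ih, hφ _ _ (h.symm _ _ hvw), mul_assoc]
    simp only [lab, hletter]
  let ψ : K →* FreeGroup (MulAction.orbitRel.Quotient K (V × V)) :=
    MonoidHom.mk' (fun k => φ (k • v0)) (fun a b => by rw [mul_smul, hmul])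
  -- the reduced word of `φ v` grows by one letter at each step away from the root
  have hword : ∀ v, r v ≠ 0 → (φ v).toWord =
      (φ (h.parent v)).toWord ++ [letter K color (h.parent v) v] := by
    intro v
    induction hn : r v using Nat.strong_induction_on generalizing v with
    | _ n ih =>
    subst hn
    intro hv
    obtain ⟨hvw, hlt⟩ := h.parent_spec hv
    set w := h.parent v with hw
    have hvw' := h.symm _ _ hvw
    have hred : FreeGroup.IsReduced ((φ w).toWord ++ [letter K color w v]) := by
      by_cases hw0 : r w = 0
      · rw [(h.root w).1 hw0, hφ0]
        simp [FreeGroup.IsReduced]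
      · obtain ⟨hwu, hlt'⟩ := h.parent_spec hw0
        have hr := FreeGroup.isReduced_toWord (x := φ w)
        rw [ih _ hlt w rfl hw0] at hr ⊢
        set u := h.parent w with hu
        unfold FreeGroup.IsReduced at hr ⊢
        rw [List.append_assoc, List.isChain_append] at *
        refine ⟨hr.1, ?_, ?_⟩
        · simp only [List.cons_append, List.nil_append, List.isChain_cons_cons, List.isChain_singleton,
            and_true]
          intro heq
          exfalso
          have hne : u ≠ v := by
            intro huv
            rw [huv] at hlt'
            omega
          have c1 := hcol' _ _ hwu
          have c2 := hcol' _ _ hvw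
          by_cases hcw : color w
          · have hcu : ¬ color u := by tauto
            simp only [letter, hcw, hcu, if_true, if_false] at heq
            obtain ⟨k, hk⟩ := Quotient.exact heq
            have k1 : k • v = u := congrArg Prod.fst hk
            have k2 : k • w = w := congrArg Prod.snd hk
            rw [hfree k w k2, one_smul] at k1
            exact hne k1.symm
          · have hcu : color u := by tauto
            simp only [letter, hcw, hcu, if_true, if_false] at heq
            obtain ⟨k, hk⟩ := Quotient.exact heq
            have k1 : k • w = w := congrArg Prod.fst hk
            have k2 : k • v = u := congrArg Prod.snd hk
            rw [hfree k w k1, one_smul] at k2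
            exact hne k2.symm
        · simpa using hr.2.2
    rw [hφ w v hvw']
    simp only [lab]
    rw [FreeGroup.toWord_mul, FreeGroup.toWord_mk, FreeGroup.reduce_singleton, hred.reduce_eq]
  have hinj : Function.Injective ψ := by
    rw [injective_iff_map_eq_one]
    intro k hk
    have hk : φ (k • v0) = 1 := hk
    by_cases hr : r (k • v0) = 0
    · exact hfree k v0 ((h.root _).1 hr)
    · have := hword _ hr
      rw [hk] at this
      simp at this
  have : IsFreeGroup ψ.range := subgroupIsFreeOfIsFree _
  exact IsFreeGroup.ofMulEquiv (MonoidHom.ofInjective hinj).symm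

end Free

/-- **A replacement for Bass–Serre theory**: a group acting on a tree without inversions, with
finitely many orbits and finite stabilizers, is virtually free. -/
theorem virtuallyFree_of_action {G V : Type} [Group G] [MulAction G V] {Adj : V → V → Prop}
    {r : V → ℕ} {v0 : V} (h : IsRootedTree Adj r v0)
    (hAdj : ∀ (g : G) v w, Adj v w → Adj (g • v) (g • w)) (color : V → Prop)
    (hcol : ∀ (g : G) v, color (g • v) ↔ color v)
    (hcol' : ∀ v w, Adj v w → (color v ↔ ¬ color w))
    (hf : ∀ v : V, Finite (MulAction.stabilizer G v))
    (V0 : Set V) (hV0 : V0.Finite) (horb : ∀ v : V, ∃ u ∈ V0, ∃ g : G, g • u = v) :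
    ∃ F : Subgroup G, IsFreeGroup F ∧ F.FiniteIndex := by
  classical
  let m : ℕ := ∏ u ∈ hV0.toFinset, Nat.card (MulAction.stabilizer G u)
  have hmpos : 0 < m := Finset.prod_pos fun u _ => have := hf u; Nat.card_pos
  have hm : ∀ v : V, Nat.card (MulAction.stabilizer G v) ∣ m := by
    intro v
    obtain ⟨u, hu, g, rfl⟩ := horb v
    have : Nat.card (MulAction.stabilizer G (g • u)) = Nat.card (MulAction.stabilizer G u) :=
      Nat.card_congr (MulAction.stabilizerEquivStabilizerOfOrbitRel ⟨g, rfl⟩).toEquiv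
    rw [this]
    exact Finset.dvd_prod_of_mem _ (hV0.mem_toFinset.2 hu)
  obtain ⟨c, hc⟩ := exists_cocycle hf hm
  obtain ⟨T0, hT0⟩ := exists_transport hf hc
  -- make the transport inverse to itself along reversed edges
  let T : V → V → Equiv.Perm (Fin m) := fun v w => if color v then T0 (v, w) else (T0 (w, v))⁻¹
  have hT : ∀ (g : G) v w, T (g • v) (g • w) * c g v = c g w * T v w := by
    intro g v w
    by_cases hv : color v
    · simp only [T, hcol, hv, if_true]
      exact hT0 g (v, w)
    · simp only [T, hcol, hv, if_false]
      have : T0 (g • w, g • v) * c g w = c g v * T0 (w, v) := hT0 g (w, v)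
      rw [inv_mul_eq_iff_eq_mul, ← mul_assoc, this]
      group
  have hTinv : ∀ v w, Adj v w → T w v * T v w = 1 := by
    intro v w hvw
    have := hcol' v w hvw
    by_cases hv : color v
    · have hw := this.1 hv
      simp [T, hv, hw]
    · have hw : color w := by tauto
      simp [T, hv, hw]
  obtain ⟨y, -, hy⟩ := h.exists_section (fun v w x => T v w x)
    (fun v w x hvw => by rw [← Equiv.Perm.mul_apply, hTinv v w hvw]; rfl) (⟨0, hmpos⟩ : Fin m)
  let K : Subgroup G :=
    { carrier := {g | ∀ v, c g v (y v) = y (g • v)}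
      one_mem' := fun v => by rw [hc.one, one_smul]; rfl
      mul_mem' := fun {a b} ha hb v => by
        rw [hc.mul, Equiv.Perm.mul_apply, hb v, ha, mul_smul]
      inv_mem' := fun {a} ha v => by
        have h1 := ha (a⁻¹ • v)
        rw [smul_inv_smul] at h1
        have h2 := hc.mul a⁻¹ a (a⁻¹ • v)
        rw [inv_mul_cancel, hc.one, smul_inv_smul] at h2
        rw [← h1, ← Equiv.Perm.mul_apply, ← h2]
        rfl }
  refine ⟨K, ?_, ?_⟩
  · refine isFreeGroup_of_free_action (K := K) h (fun k v w => hAdj k v w) color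
      (fun k v => hcol k v) hcol' fun k v hkv => ?_
    have hkv : (k : G) • v = v := hkv
    have := k.2 v
    rw [hkv] at this
    exact Subtype.ext (hc.free _ v _ hkv this)
  · -- the translates of the flat section `y` are determined by their values at the root
    let f : G → V → Fin m := fun g v => c g (g⁻¹ • v) (y (g⁻¹ • v))
    have hflat : ∀ g v w, Adj v w → f g w = T v w (f g v) := by
      intro g v w hvw
      have h1 := hy _ _ (hAdj g⁻¹ v w hvw)
      have h2 := hT g (g⁻¹ • v) (g⁻¹ • w)
      rw [smul_inv_smul, smul_inv_smul] at h2
      simp only [f]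
      rw [h1, ← Equiv.Perm.mul_apply, ← h2]
      rfl
    have hK : ∀ a b : G, f a v0 = f b v0 → a⁻¹ * b ∈ K := by
      intro a b hab
      have hall : ∀ v, f a v = f b v := h.induct hab fun v w hvw ih => by
        rw [hflat a w v (h.symm _ _ hvw), hflat b w v (h.symm _ _ hvw), ih]
      intro v
      have h1 := hall (b • v)
      simp only [f, inv_smul_smul] at h1
      have h2 := hc.mul a (a⁻¹ * b) v
      rw [mul_inv_cancel_left, mul_smul] at h2
      rw [h2, Equiv.Perm.mul_apply] at h1
      rw [mul_smul]
      exact ((c a (a⁻¹ • b • v)).injective h1).symm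
    have : Finite (G ⧸ K) := by
      refine Finite.of_injective (fun q : G ⧸ K => f q.out v0) fun q q' hqq => ?_
      rw [← QuotientGroup.out_eq' q, ← QuotientGroup.out_eq' q']
      exact QuotientGroup.eq.2 (hK _ _ hqq)
    exact Subgroup.finiteIndex_of_finite_quotient

end TreeAction

/-! ### The tree of a nested family of cuts -/

namespace CutTree

open scoped Pointwise

/-- A family of pairwise nested, proper nonempty cuts closed under complementation, such that two
points are separated by only finitely many of its members. -/
structure IsNested {X : Type} (E : Set (Set X)) : Prop where
  compl : ∀ A ∈ E, Aᶜ ∈ E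
  nested : ∀ A ∈ E, ∀ B ∈ E, A ⊆ Bᶜ ∨ A ⊆ B ∨ B ⊆ A ∨ Aᶜ ⊆ B
  ne_empty : ∀ A ∈ E, A.Nonempty
  finite : ∀ x y : X, {B ∈ E | x ∈ B ∧ y ∉ B}.Finite

section

variable {X : Type} (E : Set (Set X))

/-- The midpoint of the edge `{A, Aᶜ}` of the tree, encoded by the set of all cuts containing one
of the two sides. -/
def mid (A : Set X) : Set (Set X) := {B ∈ E | A ⊆ B ∨ Aᶜ ⊆ B}

/-- The endpoint, on the side of `A`, of the edge `{A, Aᶜ}` of the tree, encoded by the set of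
cuts pointing towards it. -/
def endpt (A : Set X) : Set (Set X) := mid E A \ {Aᶜ}

/-- A consistent choice of a side of every cut. -/
structure IsOrientation (u : Set (Set X)) : Prop where
  sub : u ⊆ E
  choice : ∀ B ∈ E, B ∈ u ↔ Bᶜ ∉ u
  up : ∀ B ∈ u, ∀ C ∈ E, B ⊆ C → C ∈ u

/-- The cuts pointing towards the point `x`. -/
def towards (x : X) : Set (Set X) := {B ∈ E | x ∈ B}

variable {E}

lemma isOrientation_towards (hE : IsNested E) (x : X) : IsOrientation E (towards E x) where
  sub := fun _ h => h.1
  choice := fun B hB => by simp [towards, hB, hE.compl B hB]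
  up := fun B hB C hC hBC => ⟨hC, hBC hB.2⟩

lemma IsNested.compl_nonempty (hE : IsNested E) {A : Set X} (hA : A ∈ E) : (Aᶜ).Nonempty :=
  hE.ne_empty _ (hE.compl A hA)

lemma mid_compl (A : Set X) : mid E Aᶜ = mid E A := by
  ext B; simp only [mid, compl_compl, Set.mem_sep_iff]; tauto

lemma compl_mem_mid (hE : IsNested E) {A : Set X} (hA : A ∈ E) : Aᶜ ∈ mid E A :=
  ⟨hE.compl A hA, Or.inr subset_rfl⟩

lemma mem_endpt_self (hE : IsNested E) {A : Set X} (hA : A ∈ E) : A ∈ endpt E A := by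
  refine ⟨⟨hA, Or.inl subset_rfl⟩, fun h => ?_⟩
  obtain ⟨x, hx⟩ := hE.ne_empty A hA
  have : x ∈ Aᶜ := (show A = Aᶜ from h) ▸ hx
  exact this hx

lemma insert_endpt (hE : IsNested E) {A : Set X} (hA : A ∈ E) :
    insert Aᶜ (endpt E A) = mid E A := by
  rw [endpt, Set.insert_sdiff_singleton, Set.insert_eq_of_mem (compl_mem_mid hE hA)]

lemma isOrientation_endpt (hE : IsNested E) {A : Set X} (hA : A ∈ E) :
    IsOrientation E (endpt E A) where
  sub := fun _ h => h.1.1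
  choice := fun B hB => by
    obtain ⟨a, ha⟩ := hE.ne_empty A hA
    obtain ⟨b, hb⟩ := hE.compl_nonempty hA
    constructor
    · rintro ⟨⟨-, h1⟩, h2⟩ ⟨⟨-, h3⟩, h4⟩
      rw [Set.mem_singleton_iff] at h2 h4
      rcases h1 with h1 | h1 <;> rcases h3 with h3 | h3
      · exact h3 ha (h1 ha)
      · apply h4
        rw [(Set.compl_subset_compl.1 h3).antisymm h1]
      · apply h2
        exact (Set.subset_compl_comm.1 h3).antisymm h1
      · exact h3 hb (h1 hb)
    · intro h
      by_contra hcon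
      simp only [endpt, mid, Set.mem_sdiff, Set.mem_sep_iff, Set.mem_singleton_iff, hB,
        hE.compl B hB, true_and, not_and, not_not, compl_inj_iff] at h hcon
      rcases hE.nested A hA B hB with h1 | h1 | h1 | h1
      · have h2 := h (Or.inl h1)
        rw [h2] at h1
        exact h1 ha ha
      · have h2 := hcon (Or.inl h1)
        rw [h2] at h1
        exact h1 ha ha
      · have h2 := h (Or.inr (Set.compl_subset_compl.2 h1))
        have h3 := hcon (Or.inl h2.ge)
        rw [h2] at h3
        exact (h3 ▸ ha : a ∈ Aᶜ) ha
      · have h2 := hcon (Or.inr h1)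
        have h3 := h (Or.inl (by rw [h2, compl_compl]))
        rw [h2] at h3
        exact (h3.symm ▸ ha : a ∈ Aᶜ) ha
  up := fun B hB C hC hBC => by
    refine ⟨⟨hC, hB.1.2.imp (·.trans hBC) (·.trans hBC)⟩, fun h => ?_⟩
    rw [Set.mem_singleton_iff] at h
    obtain ⟨a, ha⟩ := hE.ne_empty A hA
    rcases hB.1.2 with h1 | h1
    · exact (h ▸ hBC) (h1 ha) ha
    · exact hB.2 ((h ▸ hBC).antisymm h1)

lemma IsOrientation.eq_of_subset {u v : Set (Set X)} (hu : IsOrientation E u)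
    (hv : IsOrientation E v) (h : u ⊆ v) : u = v := by
  refine h.antisymm fun B hB => ?_
  by_contra hBu
  have h1 := hv.sub hB
  have : Bᶜ ∈ u := by
    by_contra h2
    exact hBu ((hu.choice B h1).2 h2)
  exact (hv.choice B h1).1 hB (h this)

/-- An orientation with a minimal member `A` is the endpoint of the edge `{A, Aᶜ}`. -/
lemma IsOrientation.eq_endpt (hE : IsNested E) {u : Set (Set X)} (hu : IsOrientation E u)
    {A : Set X} (hA : A ∈ u) (hmin : ∀ B ∈ u, B ⊆ A → B = A) : u = endpt E A := by
  symm
  refine (isOrientation_endpt hE (hu.sub hA)).eq_of_subset hu ?_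
  rintro B ⟨⟨hB, h1⟩, h2⟩
  rcases h1 with h1 | h1
  · exact hu.up A hA B hB h1
  · by_contra h3
    have : Bᶜ ∈ u := by
      by_contra h4
      exact h3 ((hu.choice B hB).2 h4)
    have := hmin _ this (Set.compl_subset_comm.1 h1)
    exact h2 (by rw [← this]; simp)

lemma endpt_minimal (hE : IsNested E) {A : Set X} (hA : A ∈ E) {B : Set X} (hB : B ∈ endpt E A)
    (hBA : B ⊆ A) : B = A := by
  rcases hB.1.2 with h | h
  · exact hBA.antisymm h
  · obtain ⟨a, ha⟩ := hE.compl_nonempty hA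
    exact absurd (hBA (h ha)) ha

lemma eq_or_compl_of_mid_eq (hE : IsNested E) {A B : Set X} (hA : A ∈ E) (hB : B ∈ E)
    (h : mid E B = mid E A) : B = A ∨ B = Aᶜ := by
  have h1 : B ∈ mid E A := h ▸ ⟨hB, Or.inl subset_rfl⟩
  have h2 : Bᶜ ∈ mid E A := h ▸ compl_mem_mid hE hB
  rw [← insert_endpt hE hA] at h1 h2
  rcases h1 with h1 | h1
  · exact Or.inr h1
  · rcases h2 with h2 | h2
    · exact Or.inl (compl_injective h2)
    · exact absurd h2 (((isOrientation_endpt hE hA).choice B hB).1 h1)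

lemma exists_minimal_of_finite {u : Set (Set X)} (hu : u.Finite) {C : Set X} (hC : C ∈ u) :
    ∃ A ∈ u, ∀ B ∈ u, B ⊆ A → B = A := by
  obtain ⟨A, -, hA⟩ := hu.exists_le_minimal hC
  exact ⟨A, hA.1, fun B hB h => h.antisymm (hA.2 hB h)⟩

/-- The cuts pointing towards a point are those pointing towards some vertex of the tree. -/
lemma exists_towards_eq (hE : IsNested E) (hne : E.Nonempty) (x : X) :
    ∃ A ∈ E, towards E x = endpt E A := by
  obtain ⟨C, hC⟩ : ∃ C, C ∈ towards E x := by
    obtain ⟨A, hA⟩ := hne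
    by_cases hx : x ∈ A
    · exact ⟨A, hA, hx⟩
    · exact ⟨Aᶜ, hE.compl A hA, hx⟩
  obtain ⟨y, hy⟩ := hE.compl_nonempty hC.1
  obtain ⟨A, hA, hmin⟩ := exists_minimal_of_finite (hE.finite x y) (C := C) ⟨hC.1, hC.2, hy⟩
  refine ⟨A, hA.1, (isOrientation_towards hE x).eq_endpt hE ⟨hA.1, hA.2.1⟩ fun B hB hBA => ?_⟩
  exact hmin B ⟨hB.1, hB.2, fun h => hA.2.2 (hBA h)⟩ hBA

variable (E) in
/-- The vertices of the (barycentrically subdivided) tree. -/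
def verts : Set (Set (Set X)) := {u | ∃ A ∈ E, u = endpt E A ∨ u = mid E A}

lemma finite_away (hE : IsNested E) (x : X) {A : Set X} (hA : A ∈ E) :
    {B ∈ mid E A | x ∉ B}.Finite := by
  obtain ⟨a, ha⟩ := hE.ne_empty A hA
  obtain ⟨b, hb⟩ := hE.compl_nonempty hA
  refine ((hE.finite a x).union (hE.finite b x)).subset ?_
  rintro B ⟨⟨hB, h | h⟩, hx⟩
  · exact Or.inl ⟨hB, h ha, hx⟩
  · exact Or.inr ⟨hB, h hb, hx⟩

lemma finite_away_verts (hE : IsNested E) (x : X) {u : Set (Set X)} (hu : u ∈ verts E) :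
    {B ∈ u | x ∉ B}.Finite := by
  obtain ⟨A, hA, rfl | rfl⟩ := hu
  · exact (finite_away hE x hA).subset fun B hB => ⟨hB.1.1, hB.2⟩
  · exact finite_away hE x hA

lemma verts_choice (hE : IsNested E) {u : Set (Set X)} (hu : u ∈ verts E) {C : Set X}
    (hC : C ∈ E) : C ∈ u ∨ Cᶜ ∈ u := by
  obtain ⟨A, hA, rfl | rfl⟩ := hu
  · have := (isOrientation_endpt hE hA).choice C hC
    tauto
  · have := (isOrientation_endpt hE hA).choice C hC
    rw [← insert_endpt hE hA, Set.mem_insert_iff, Set.mem_insert_iff]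
    tauto

lemma verts_subset {u : Set (Set X)} (hu : u ∈ verts E) : u ⊆ E := by
  obtain ⟨A, hA, rfl | rfl⟩ := hu
  · exact fun B hB => hB.1.1
  · exact fun B hB => hB.1

lemma finite_symmDiff (hE : IsNested E) (x : X) {u : Set (Set X)} (hu : u ∈ verts E) :
    (symmDiff u (towards E x)).Finite := by
  have h := finite_away_verts hE x hu
  refine (h.union (h.image compl)).subset ?_
  rintro B (⟨h1, h2⟩ | ⟨h1, h2⟩)
  · exact Or.inl ⟨h1, fun hx => h2 ⟨verts_subset hu h1, hx⟩⟩
  · refine Or.inr ⟨Bᶜ, ⟨(verts_choice hE hu h1.1).resolve_left h2, fun h => h h1.2⟩, by simp⟩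

/-- The distance to the vertex given by the point `x`: the number of cuts pointing to exactly one
of the two. -/
noncomputable def rank (E : Set (Set X)) (x : X) (u : Set (Set X)) : ℕ :=
  (symmDiff u (towards E x)).ncard

lemma rank_mid (hE : IsNested E) {x : X} {A : Set X} (hA : A ∈ E) (hx : x ∈ A) :
    rank E x (mid E A) = rank E x (endpt E A) + 1 := by
  have hf := finite_symmDiff hE x (u := endpt E A) ⟨A, hA, Or.inl rfl⟩
  have hn : Aᶜ ∉ towards E x := fun h => h.2 hx
  have hn' : Aᶜ ∉ endpt E A := fun h => h.2 rfl
  rw [rank, rank, ← Set.ncard_insert_of_notMem _ hf]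
  · congr 1
    rw [← insert_endpt hE hA]
    ext B
    simp only [Set.mem_symmDiff, Set.mem_insert_iff]
    by_cases h : B = Aᶜ
    · subst h; tauto
    · tauto
  · rw [Set.mem_symmDiff]; tauto

lemma rank_endpt (hE : IsNested E) {x : X} {A : Set X} (hA : A ∈ E) (hx : x ∉ A) :
    rank E x (endpt E A) = rank E x (mid E A) + 1 := by
  have hf := finite_symmDiff hE x (u := mid E A) ⟨A, hA, Or.inr rfl⟩
  have hn : Aᶜ ∈ towards E x := ⟨hE.compl A hA, hx⟩
  have hn' : Aᶜ ∉ endpt E A := fun h => h.2 rfl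
  rw [rank, rank, ← Set.ncard_insert_of_notMem _ hf]
  · congr 1
    rw [← insert_endpt hE hA]
    ext B
    simp only [Set.mem_symmDiff, Set.mem_insert_iff]
    by_cases h : B = Aᶜ
    · subst h; tauto
    · tauto
  · rw [Set.mem_symmDiff, ← insert_endpt hE hA]
    simp [hn]

/-- Adjacency in the subdivided tree: an endpoint of an edge is adjacent to its midpoint. -/
def Adj (E : Set (Set X)) (u w : Set (Set X)) : Prop :=
  ∃ A ∈ E, (u = endpt E A ∧ w = mid E A) ∨ (u = mid E A ∧ w = endpt E A)

/-- The midpoints are distinguished from the endpoints by containing both sides of some cut. -/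
def IsMid (u : Set (Set X)) : Prop := ∃ B, B ∈ u ∧ Bᶜ ∈ u

lemma isMid_mid (hE : IsNested E) {A : Set X} (hA : A ∈ E) : IsMid (mid E A) :=
  ⟨A, ⟨hA, Or.inl subset_rfl⟩, compl_mem_mid hE hA⟩

lemma not_isMid_endpt (hE : IsNested E) {A : Set X} (hA : A ∈ E) : ¬ IsMid (endpt E A) := by
  rintro ⟨B, h1, h2⟩
  exact ((isOrientation_endpt hE hA).choice B h1.1.1).1 h1 h2

lemma endpt_ne_mid (hE : IsNested E) {A B : Set X} (hA : A ∈ E) (hB : B ∈ E) :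
    endpt E A ≠ mid E B := fun h => not_isMid_endpt hE hA (h ▸ isMid_mid hE hB)

theorem isRootedTree (hE : IsNested E) (x : X) (v0 : verts E) (hv0 : v0.1 = towards E x) :
    TreeAction.IsRootedTree (V := verts E) (fun u w => Adj E u.1 w.1)
      (fun u => rank E x u.1) v0 where
  symm := fun v w ⟨A, hA, h⟩ => ⟨A, hA, h.symm.imp And.symm And.symm⟩
  root := fun v => by
    rw [rank, Set.ncard_eq_zero (finite_symmDiff hE x v.2), Subtype.ext_iff, hv0]
    exact symmDiff_eq_bot
  rank_ne := by
    rintro ⟨v, hv⟩ ⟨w, hw⟩ ⟨A, hA, ⟨rfl, rfl⟩ | ⟨rfl, rfl⟩⟩ <;> simp only <;>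
      by_cases hx : x ∈ A <;> first
        | (have := rank_mid hE hA hx; omega)
        | (have := rank_endpt hE hA hx; omega)
  parent_unique := by
    rintro ⟨v, hv⟩ ⟨w, hw⟩ ⟨w', hw'⟩ ⟨A, hA, ⟨rfl, rfl⟩ | ⟨rfl, rfl⟩⟩
      ⟨B, hB, ⟨hv, rfl⟩ | ⟨hv, rfl⟩⟩ h1 h2 <;> simp only at h1 h2 hv
    · have hxA : x ∉ A := fun hx => by
        have := rank_mid hE hA hx
        omega
      have hxB : x ∉ B := fun hx => by
        have := rank_mid hE hB hx
        rw [hv] at h2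
        omega
      have hAB : A = B := by
        have hAB' : A ∈ endpt E B := hv ▸ mem_endpt_self hE hA
        have hBA : B ∈ endpt E A := hv ▸ mem_endpt_self hE hB
        rcases hE.nested A hA B hB with h | h | h | h
        · exact absurd ((isOrientation_endpt hE hA).up A (mem_endpt_self hE hA) _
            (hE.compl B hB) h) (((isOrientation_endpt hE hA).choice B hB).1 hBA)
        · exact endpt_minimal hE hB hAB' h
        · exact (endpt_minimal hE hA hBA h).symm
        · exact absurd (h hxA) hxB
      simp [hAB]
    · exact absurd hv (endpt_ne_mid hE hA hB)
    · exact absurd hv.symm (endpt_ne_mid hE hB hA)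
    · have hxA : x ∈ A := by
        by_contra hx
        have := rank_endpt hE hA hx
        omega
      have hxB : x ∈ B := by
        by_contra hx
        have := rank_endpt hE hB hx
        rw [hv] at h2
        omega
      rcases eq_or_compl_of_mid_eq hE hA hB hv.symm with rfl | rfl
      · rfl
      · exact absurd hxA hxB
  exists_parent := by
    rintro ⟨v, A, hA, rfl | rfl⟩ hr
    · have ho := isOrientation_endpt hE hA
      have hex : ∃ C ∈ endpt E A, x ∉ C := by
        by_contra! hcon
        have : endpt E A = towards E x := ho.eq_of_subset (isOrientation_towards hE x)
          fun C hC => ⟨hC.1.1, hcon C hC⟩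
        apply hr
        simp [rank, this]
      obtain ⟨C, hC, hxC⟩ := hex
      obtain ⟨B, hB, hmin⟩ := exists_minimal_of_finite
        (finite_away_verts hE x (u := endpt E A) ⟨A, hA, Or.inl rfl⟩) (C := C) ⟨hC, hxC⟩
      have hBE := ho.sub hB.1
      have heq : endpt E A = endpt E B := ho.eq_endpt hE hB.1 fun D hD hDB =>
        hmin D ⟨hD, fun h => hB.2 (hDB h)⟩ hDB
      refine ⟨⟨mid E B, B, hBE, Or.inr rfl⟩, ⟨B, hBE, Or.inl ⟨heq, rfl⟩⟩, ?_⟩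
      simp only
      rw [heq, rank_endpt hE hBE hB.2]
      omega
    · by_cases hx : x ∈ A
      · refine ⟨⟨endpt E A, A, hA, Or.inl rfl⟩, ⟨A, hA, Or.inr ⟨rfl, rfl⟩⟩, ?_⟩
        have := rank_mid hE hA hx
        simp only
        omega
      · have hAc := hE.compl A hA
        refine ⟨⟨endpt E Aᶜ, Aᶜ, hAc, Or.inl rfl⟩,
          ⟨Aᶜ, hAc, Or.inr ⟨(mid_compl A).symm, rfl⟩⟩, ?_⟩
        have := rank_mid hE hAc hx
        rw [mid_compl] at this
        simp only
        omega

variable {G : Type} [Group G] [MulAction G X]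

lemma smul_mid (hinv : ∀ (g : G), ∀ A ∈ E, g • A ∈ E) (g : G) (A : Set X) :
    g • mid E A = mid E (g • A) := by
  have hmem : ∀ (B : Set X), g⁻¹ • B ∈ E ↔ B ∈ E := fun B =>
    ⟨fun h => by simpa using hinv g _ h, hinv g⁻¹ B⟩
  ext B
  rw [Set.mem_smul_set_iff_inv_smul_mem]
  simp only [mid, Set.mem_sep_iff, hmem, ← Set.smul_set_compl, Set.smul_set_subset_iff_subset_inv_smul_set]

lemma smul_endpt (hinv : ∀ (g : G), ∀ A ∈ E, g • A ∈ E) (g : G) (A : Set X) :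
    g • endpt E A = endpt E (g • A) := by
  rw [endpt, endpt, Set.smul_set_sdiff, smul_mid hinv, Set.smul_set_singleton, Set.smul_set_compl]

lemma adj_smul (hinv : ∀ (g : G), ∀ A ∈ E, g • A ∈ E) (g : G) {u w : Set (Set X)}
    (h : Adj E u w) : Adj E (g • u) (g • w) := by
  obtain ⟨A, hA, ⟨rfl, rfl⟩ | ⟨rfl, rfl⟩⟩ := h
  · exact ⟨g • A, hinv g A hA, Or.inl ⟨smul_endpt hinv g A, smul_mid hinv g A⟩⟩
  · exact ⟨g • A, hinv g A hA, Or.inr ⟨smul_mid hinv g A, smul_endpt hinv g A⟩⟩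

lemma isMid_smul_of (g : G) {u : Set (Set X)} (h : IsMid u) : IsMid (g • u) := by
  obtain ⟨B, h1, h2⟩ := h
  refine ⟨g • B, Set.smul_mem_smul_set h1, ?_⟩
  rw [← Set.smul_set_compl]
  exact Set.smul_mem_smul_set h2

lemma isMid_smul (g : G) {u : Set (Set X)} : IsMid (g • u) ↔ IsMid u :=
  ⟨fun h => by simpa using isMid_smul_of g⁻¹ h, isMid_smul_of g⟩

lemma isFreeGroup_bot (G : Type) [Group G] : IsFreeGroup (⊥ : Subgroup G) :=
  IsFreeGroup.ofMulEquiv (MulEquiv.ofUnique : FreeGroup Empty ≃* (⊥ : Subgroup G))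

/-- A group acting on an invariant nested family of cuts, with finitely many orbits, and such that
only finitely many group elements move the base point `x` across cuts taken from the translates of
a given finite set, is virtually free. -/
theorem virtuallyFree_of_nested (hE : IsNested E) (x : X)
    (hinv : ∀ (g : G), ∀ A ∈ E, g • A ∈ E)
    (horb : ∃ E0 : Set (Set X), E0.Finite ∧ E0 ⊆ E ∧ ∀ A ∈ E, ∃ g : G, ∃ B ∈ E0, g • B = A)
    (hstab : ∀ Φ : Set (Set X), Φ.Finite → Φ ⊆ E →
      {g : G | ∀ C ∈ E, ¬ (x ∈ C ↔ g • x ∈ C) →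
        C ∈ Φ ∨ Cᶜ ∈ Φ ∨ g⁻¹ • C ∈ Φ ∨ (g⁻¹ • C)ᶜ ∈ Φ}.Finite) :
    ∃ F : Subgroup G, IsFreeGroup F ∧ F.FiniteIndex := by
  rcases E.eq_empty_or_nonempty with rfl | hne
  · have h := hstab ∅ Set.finite_empty (Set.empty_subset _)
    have : Finite G := by
      rw [← Set.finite_univ_iff]
      exact h.subset fun g _ C hC => absurd hC (Set.notMem_empty C)
    exact ⟨⊥, isFreeGroup_bot G, inferInstance⟩
  obtain ⟨A0, hA0, hv0⟩ := exists_towards_eq hE hne x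
  let V : SubMulAction G (Set (Set X)) :=
    { carrier := verts E
      smul_mem' := by
        rintro g _ ⟨A, hA, rfl | rfl⟩
        · exact ⟨g • A, hinv g A hA, Or.inl (smul_endpt hinv g A)⟩
        · exact ⟨g • A, hinv g A hA, Or.inr (smul_mid hinv g A)⟩ }
  have htree := isRootedTree hE x ⟨endpt E A0, A0, hA0, Or.inl rfl⟩ hv0.symm
  obtain ⟨E0, hE0, hE0', horb⟩ := horb
  let V0 : Set V := {v | ∃ A ∈ E0, v.1 = endpt E A ∨ v.1 = mid E A}
  have hV0 : V0.Finite := by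
    refine Set.Finite.of_finite_image (f := Subtype.val) ?_ Subtype.val_injective.injOn
    refine ((hE0.image (endpt E)).union (hE0.image (mid E))).subset ?_
    rintro _ ⟨v, ⟨A, hA, h | h⟩, rfl⟩
    · exact Or.inl ⟨A, hA, h.symm⟩
    · exact Or.inr ⟨A, hA, h.symm⟩
  refine TreeAction.virtuallyFree_of_action (V := V) htree
    (fun g v w h => adj_smul hinv g h) (fun v => IsMid v.1) (fun g v => isMid_smul g) ?_ ?_ V0 hV0 ?_
  · rintro ⟨v, hv⟩ ⟨w, hw⟩ ⟨A, hA, ⟨rfl, rfl⟩ | ⟨rfl, rfl⟩⟩ <;>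
      simp [isMid_mid hE hA, not_isMid_endpt hE hA]
  · rintro ⟨v, hv⟩
    have hΦ := finite_away_verts hE x hv
    refine (hstab _ hΦ fun B hB => verts_subset hv hB.1).subset ?_
    intro g hg C hC hsep
    have hg : g • v = v := congrArg Subtype.val hg
    have hg' : g⁻¹ • v = v := by rw [inv_smul_eq_iff, hg]
    have key : ∀ D ∈ v, ¬ (x ∈ D ↔ g • x ∈ D) →
        D ∈ {B ∈ v | x ∉ B} ∨ g⁻¹ • D ∈ {B ∈ v | x ∉ B} := by
      intro D hD hsep
      by_cases hx : x ∈ D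
      · right
        refine ⟨hg' ▸ Set.smul_mem_smul_set hD, fun h => hsep ?_⟩
        rw [Set.mem_smul_set_iff_inv_smul_mem, inv_inv] at h
        exact ⟨fun _ => h, fun _ => hx⟩
      · exact Or.inl ⟨hD, hx⟩
    rcases verts_choice hE hv hC with h | h
    · rcases key C h hsep with h | h
      · exact Or.inl h
      · exact Or.inr (Or.inr (Or.inl h))
    · rcases key _ h (by simp only [Set.mem_compl_iff]; tauto) with h | h
      · exact Or.inr (Or.inl h)
      · rw [Set.smul_set_compl] at h
        exact Or.inr (Or.inr (Or.inr h))
  · rintro ⟨v, A, hA, rfl | rfl⟩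
    · obtain ⟨g, B, hB, rfl⟩ := horb A hA
      exact ⟨⟨endpt E B, B, hE0' hB, Or.inl rfl⟩, ⟨B, hB, Or.inl rfl⟩, g,
        Subtype.ext (smul_endpt hinv g B)⟩
    · obtain ⟨g, B, hB, rfl⟩ := horb A hA
      exact ⟨⟨mid E B, B, hE0' hB, Or.inr rfl⟩, ⟨B, hB, Or.inr rfl⟩, g,
        Subtype.ext (smul_mid hinv g B)⟩

end

end CutTree

/-! ### Cuts of Cayley graphs -/

namespace Cuts

open scoped Pointwise

section Cayley

variable {G L : Type} [Group G] (p : L → G)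

/-- Initial vertex of an edge of the Cayley graph. -/
def src (e : G × L) : G := e.1

/-- Terminal vertex of an edge of the Cayley graph with respect to the generators `p`. -/
def tgt (e : G × L) : G := e.1 * p e.2

variable {p}

lemma conn_cayley (hgen : ∀ g : G, ∃ w : List L, (w.map p).prod = g) :
    Conn (src (L := L)) (tgt p) := by
  intro x y
  have key : ∀ (w : List L) (x : G), ∃ F : Set (G × L), F.Finite ∧
      ∀ B : Set G, Disjoint (bd src (tgt p) B) F → (x ∈ B ↔ x * (w.map p).prod ∈ B) := by
    intro w
    induction w with
    | nil => exact fun x => ⟨∅, Set.finite_empty, by simp⟩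
    | cons a w ih =>
      intro x
      obtain ⟨F, hF, hF'⟩ := ih (x * p a)
      refine ⟨insert (x, a) F, hF.insert _, fun B hB => ?_⟩
      rw [Set.disjoint_insert_right] at hB
      have h1 := hF' B hB.2
      have h2 := hB.1
      rw [mem_bd, not_not] at h2
      rw [List.map_cons, List.prod_cons, ← mul_assoc, ← h1]
      exact h2
  obtain ⟨w, hw⟩ := hgen (x⁻¹ * y)
  obtain ⟨F, hF, hF'⟩ := key w x
  exact ⟨F, hF, fun B hB => by rw [hF' B hB, hw, mul_inv_cancel_left]⟩

/-- Left translations are automorphisms of the Cayley graph. -/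
lemma isAut_mulLeft (g : G) : IsAut (src (L := L)) (tgt p) (Equiv.mulLeft g)
    ((Equiv.mulLeft g).prodCongr (Equiv.refl L)) :=
  ⟨fun _ => rfl, fun e => by simp [tgt, mul_assoc]⟩

lemma smul_eq_preimage (g : G) (A : Set G) : g • A = Equiv.mulLeft g⁻¹ ⁻¹' A := by
  ext x; simp [Set.mem_smul_set_iff_inv_smul_mem]

lemma smul_opt {k : ℕ} (g : G) {A : Set G} (hA : A ∈ Opt src (tgt p) k) :
    g • A ∈ Opt src (tgt p) k := by
  rw [smul_eq_preimage]
  exact (isAut_mulLeft g⁻¹).opt hA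

lemma mem_bd_smul (g : G) (A : Set G) (x : G) (a : L) :
    (g * x, a) ∈ bd src (tgt p) (g • A) ↔ (x, a) ∈ bd src (tgt p) A := by
  simp [mem_bd, src, tgt, Set.mem_smul_set_iff_inv_smul_mem, mul_assoc]

lemma isNested_opt (hc : Conn (src (L := L)) (tgt p)) (k : ℕ) :
    CutTree.IsNested (Opt (src (L := L)) (tgt p) k) where
  compl := fun _ hA => opt_compl.2 hA
  nested := fun _ hA _ hB => not_crosses_iff.1 (opt_nested hc hA hB)
  ne_empty := fun A hA => by
    rw [Set.nonempty_iff_ne_empty]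
    rintro rfl
    exact hA.1.2.2 Gen.empty
  finite := fun x y => by
    obtain ⟨F, hF, hF'⟩ := hc x y
    refine (hF.biUnion fun e _ => thin_finite hc k e).subset ?_
    rintro B ⟨hB, hx, hy⟩
    by_contra hcon
    have : Disjoint (bd src (tgt p) B) F := Set.disjoint_left.2 fun e he heF =>
      hcon (Set.mem_biUnion heF ⟨hB.1, he⟩)
    exact hy ((hF' B this).1 hx)

/-- A group with a system of finite sets `W g` (the points between `1` and `g`), satisfying a
triangle inequality and tending to infinity with `g`, is virtually free. The triangle inequality
shows that the set of `x` such that `1` is not between `x` and `y` has a boundary bounded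
independently of `y`; so finitely many optimal cuts, with their translates, detect which points
are between two given points. -/
theorem virtuallyFree_of_between [Finite L] (hgen : ∀ g : G, ∃ w : List L, (w.map p).prod = g)
    (W : G → Set G) (hfin : ∀ g, (W g).Finite)
    (htri : ∀ g h v, v ∈ W (g * h) → v ∈ W g ∨ g⁻¹ * v ∈ W h)
    (hprop : ∀ n : ℕ, {g | (W g).ncard ≤ n}.Finite) :
    ∃ F : Subgroup G, IsFreeGroup F ∧ F.FiniteIndex := by
  have hc := conn_cayley hgen
  -- the edges with the point `1` between their ends
  let D : Set (G × L) := {e | e.1⁻¹ ∈ W (p e.2) ∨ (e.1 * p e.2)⁻¹ ∈ W (p e.2)⁻¹}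
  have hD : D.Finite := by
    refine (Set.finite_iUnion (f := fun a : L => (fun v : G => (v⁻¹, a)) '' W (p a) ∪
      (fun v : G => (v⁻¹ * (p a)⁻¹, a)) '' W (p a)⁻¹) fun a =>
        ((hfin _).image _).union ((hfin _).image _)).subset ?_
    rintro ⟨x, a⟩ h
    refine Set.mem_iUnion.2 ⟨a, ?_⟩
    rcases h with h | h
    · exact Or.inl ⟨_, h, by simp⟩
    · exact Or.inr ⟨_, h, by simp⟩
  let H : G → Set G := fun y => {x | x⁻¹ ∉ W (x⁻¹ * y)}
  have hH : ∀ y, bd src (tgt p) (H y) ⊆ D := by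
    rintro y ⟨x, a⟩ he
    simp only [mem_bd, src, tgt, H, Set.mem_ofPred_eq, not_iff_not] at he
    by_cases hx : x⁻¹ ∈ W (x⁻¹ * y)
    · have hx' : (x * p a)⁻¹ ∉ W ((x * p a)⁻¹ * y) := by tauto
      rcases htri (p a) ((x * p a)⁻¹ * y) x⁻¹ (by convert hx using 2; group) with h | h
      · exact Or.inl h
      · exact absurd (by convert h using 1; group) hx'
    · have hx' : (x * p a)⁻¹ ∈ W ((x * p a)⁻¹ * y) := by tauto
      rcases htri (p a)⁻¹ (x⁻¹ * y) (x * p a)⁻¹ (by convert hx' using 2; group) with h | h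
      · exact Or.inr h
      · exact absurd (by convert h using 1; group) hx
  set k := D.ncard with hk
  set E := Opt (src (L := L)) (tgt p) k with hE
  have hHfin : (Set.range H).Finite := by
    have : {A : Set G | bd src (tgt p) A ⊆ D}.Finite := by
      refine Set.Finite.preimage' (f := bd src (tgt p)) hD.finite_subsets fun F _ => ?_
      rcases (bd src (tgt p) ⁻¹' {F}).eq_empty_or_nonempty with h | ⟨A, hA⟩
      · rw [h]; exact Set.finite_empty
      · refine (Set.toFinite {A, Aᶜ}).subset fun B hB => ?_
        exact eq_or_compl_of_bd_eq hc ((show bd src (tgt p) B = F from hB).trans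
          (show bd src (tgt p) A = F from hA).symm)
    refine this.subset ?_
    rintro _ ⟨y, rfl⟩
    exact hH y
  have hgenH : ∀ A ∈ Set.range H, ∃ 𝒯 ⊆ E, 𝒯.Finite ∧ Gen 𝒯 A := by
    rintro _ ⟨y, rfl⟩
    exact (gen_opt (hD.subset (hH y)) (Set.ncard_le_ncard (hH y) hD)).exists_finite
  choose! 𝒯 h𝒯E h𝒯f h𝒯g using hgenH
  set E1 := ⋃ A ∈ Set.range H, 𝒯 A with hE1
  have hE1f : E1.Finite := hHfin.biUnion h𝒯f
  have hE1E : E1 ⊆ E := Set.iUnion₂_subset h𝒯E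
  have hsep : ∀ g v, v ∈ W g → g⁻¹ * v ∉ W 1 →
      ∃ B ∈ E1, ¬ (v⁻¹ ∈ B ↔ v⁻¹ * g ∈ B) := by
    intro g v hv hv'
    refine ((h𝒯g _ ⟨v⁻¹ * g, rfl⟩).mono
      (Set.subset_biUnion_of_mem (u := 𝒯) (Set.mem_range_self (v⁻¹ * g)))).exists_separating ?_
    simp only [H, Set.mem_ofPred_eq, inv_inv, mul_inv_cancel_left, hv, mul_inv_rev]
    simpa using hv'
  refine CutTree.virtuallyFree_of_nested (G := G) (isNested_opt hc k) (1 : G)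
    (fun g A hA => smul_opt g hA) ?_ ?_
  · refine ⟨{A ∈ E | ∃ a : L, ((1 : G), a) ∈ bd src (tgt p) A}, ?_, fun A hA => hA.1, ?_⟩
    · refine (Set.finite_iUnion fun a : L => thin_finite hc k ((1 : G), a)).subset ?_
      rintro A ⟨hA, a, ha⟩
      exact Set.mem_iUnion.2 ⟨a, hA.1, ha⟩
    · intro A hA
      obtain ⟨⟨x, a⟩, he⟩ := bd_nonempty_of_thin hc hA.1
      refine ⟨x, x⁻¹ • A, ⟨smul_opt x⁻¹ hA, a, ?_⟩, smul_inv_smul x A⟩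
      have := (mem_bd_smul x⁻¹ A x a).2 he
      rwa [inv_mul_cancel] at this
  · intro Φ hΦ hΦE
    set Φ' := Φ ∪ compl '' Φ with hΦ'
    have hΦ'f : Φ'.Finite := hΦ.union (hΦ.image _)
    have hΦ'E : Φ' ⊆ E := by
      rintro _ (h | ⟨B, h, rfl⟩)
      exacts [hΦE h, opt_compl.2 (hΦE h)]
    -- finitely many translations move a cut from `E1` into the given finite set
    let M : Set G := {v | ∃ B ∈ E1, v • B ∈ Φ'}
    have hM : M.Finite := by
      have : M ⊆ ⋃ B ∈ E1, ⋃ C ∈ Φ', {v : G | v • B = C} := by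
        rintro v ⟨B, hB, hv⟩
        exact Set.mem_biUnion hB (Set.mem_biUnion hv rfl)
      refine (hE1f.biUnion fun B hB => hΦ'f.biUnion fun C hC => ?_).subset this
      obtain ⟨⟨x, a⟩, he⟩ := bd_nonempty_of_thin hc (hE1E hB).1
      refine Set.Finite.of_finite_image (f := fun v : G => (v * x, a))
        ((hΦ'E hC).1.1.subset ?_) (fun v _ v' _ h => by simpa using h)
      rintro _ ⟨v, hv, rfl⟩
      rw [← (show v • B = C from hv), mem_bd_smul]
      exact he
    set M' := M ∪ W 1 with hM'
    have hM'f : M'.Finite := hM.union (hfin 1)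
    refine (hprop (M'.ncard + M'.ncard)).subset fun g hg => ?_
    have hsub : W g ⊆ M' ∪ (g * ·) '' M' := by
      intro v hv
      by_cases h1 : g⁻¹ * v ∈ W 1
      · exact Or.inr ⟨_, Or.inr h1, by simp⟩
      obtain ⟨B, hB, hBs⟩ := hsep g v hv h1
      have hmem : ∀ C : Set G, C ∈ Φ ∨ Cᶜ ∈ Φ → C ∈ Φ' := by
        rintro C (h | h)
        · exact Or.inl h
        · exact Or.inr ⟨_, h, compl_compl C⟩
      have h2 := hg (v • B) (smul_opt v (hE1E hB)) (by
        simpa [Set.mem_smul_set_iff_inv_smul_mem] using hBs)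
      have h3 : v • B ∈ Φ' ∨ g⁻¹ • v • B ∈ Φ' := by
        rcases h2 with h | h | h | h
        exacts [Or.inl (hmem _ (Or.inl h)), Or.inl (hmem _ (Or.inr h)),
          Or.inr (hmem _ (Or.inl h)), Or.inr (hmem _ (Or.inr h))]
      rcases h3 with h | h
      · exact Or.inl (Or.inl ⟨B, hB, h⟩)
      · refine Or.inr ⟨g⁻¹ * v, Or.inl ⟨B, hB, ?_⟩, by simp⟩
        rwa [mul_smul]
    calc (W g).ncard ≤ (M' ∪ (g * ·) '' M').ncard :=
          Set.ncard_le_ncard hsub (hM'f.union (hM'f.image _))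
      _ ≤ M'.ncard + ((g * ·) '' M').ncard := Set.ncard_union_le _ _
      _ ≤ M'.ncard + M'.ncard := Nat.add_le_add_left (Set.ncard_image_le hM'f) _

end Cayley

end Cuts

/-! ### From Stallings sections to virtual freeness -/

namespace Stallings

section Forward

variable {α G : Type} [Group G] {π : FreeMonoid (α × Bool) →* G} {S : Language (α × Bool)}

@[simp] lemma ev_nil (π : FreeMonoid (α × Bool) →* G) : ev π [] = 1 := map_one π

lemma ev_append (π : FreeMonoid (α × Bool) →* G) (u v : Word α) :
    ev π (u ++ v) = ev π u * ev π v := by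
  simp [ev, FreeMonoid.ofList_append]

lemma ev_cons (π : FreeMonoid (α × Bool) →* G) (a : α × Bool) (v : Word α) :
    ev π (a :: v) = π (FreeMonoid.of a) * ev π v := by
  simp [ev, FreeMonoid.ofList_cons]

lemma ev_eq_prod (π : FreeMonoid (α × Bool) →* G) (w : Word α) :
    ev π w = (w.map fun a => π (FreeMonoid.of a)).prod := by
  induction w with
  | nil => simp
  | cons a w ih => rw [ev_cons, ih, List.map_cons, List.prod_cons]

/-- The values of the prefixes of the words representing `g` in the section. -/
def between (π : FreeMonoid (α × Bool) →* G) (S : Language (α × Bool)) (g : G) : Set G :=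
  {v | ∃ u u' : Word α, u ++ u' ∈ sub S π {g} ∧ ev π u = v}

/-- Prefixes of words of `S_g` with the same left quotient have the same value. -/
lemma between_finite (hS : IsStallingsSection π S) (g : G) : (between π S g).Finite := by
  have hfin := (hS.s1 g).finite_range_leftQuotient
  have h : ∀ v ∈ between π S g, ∃ u : Word α, ev π u = v ∧ ∃ u', u ++ u' ∈ sub S π {g} := by
    rintro v ⟨u, u', h, rfl⟩
    exact ⟨u, rfl, u', h⟩
  choose! f hf hf' using h
  refine Set.Finite.of_finite_image (f := fun v => (sub S π {g}).leftQuotient (f v))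
    (hfin.subset ?_) ?_
  · rintro _ ⟨v, -, rfl⟩
    exact ⟨_, rfl⟩
  · intro v hv v' hv' hvv
    obtain ⟨u', hu'⟩ := hf' v hv
    have h1 : u' ∈ (sub S π {g}).leftQuotient (f v) := hu'
    simp only at hvv
    rw [hvv] at h1
    have h1 : f v' ++ u' ∈ sub S π {g} := h1
    have e1 : ev π (f v ++ u') = g := hu'.2
    have e2 : ev π (f v' ++ u') = g := h1.2
    rw [ev_append, hf v hv] at e1
    rw [ev_append, hf v' hv'] at e2
    exact mul_right_cancel (e1.trans e2.symm)

/-- The prefixes of the reduction of a word have the same values as some prefixes of the word. -/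
lemma exists_prefix_of_redW (hπ : IsMEpi π) (w u u' : Word α) (h : redW w = u ++ u') :
    ∃ x x' : Word α, w = x ++ x' ∧ ev π x = ev π u := by
  classical
  have hred : FreeGroup.Red w (u ++ u') := by
    rw [← h]
    exact FreeGroup.reduce.red
  clear h
  generalize hz : u ++ u' = z at hred
  induction hred generalizing u u' with
  | refl => exact ⟨u, u', hz.symm, rfl⟩
  | tail _ hstep ih =>
    subst hz
    generalize hz : u ++ u' = z at hstep
    obtain @⟨L1, L2, a, b⟩ := hstep
    rcases List.append_eq_append_iff.1 hz with ⟨c, rfl, rfl⟩ | ⟨c, rfl, rfl⟩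
    · exact ih u (c ++ (a, b) :: (a, !b) :: L2) (by simp)
    · obtain ⟨x, x', h1, h2⟩ := ih (L1 ++ (a, b) :: (a, !b) :: c) u' (by simp)
      refine ⟨x, x', h1, ?_⟩
      rw [h2, ev_append, ev_append, ev_cons, ev_cons, hπ.matched, mul_inv_cancel_left]

lemma between_mul (hπ : IsMEpi π) (hS : IsStallingsSection π S) (g h v : G)
    (hv : v ∈ between π S (g * h)) : v ∈ between π S g ∨ g⁻¹ * v ∈ between π S h := by
  obtain ⟨u, u', huu, rfl⟩ := hv
  obtain ⟨w, hw, hred⟩ := hS.s2 g h _ huu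
  obtain ⟨w1, h1, w2, h2, rfl⟩ := Language.mem_mul.1 hw
  obtain ⟨x, x', hx, hev⟩ := exists_prefix_of_redW hπ _ _ _ hred
  rw [← hev]
  rcases List.append_eq_append_iff.1 hx with ⟨c, rfl, rfl⟩ | ⟨c, rfl, rfl⟩
  · right
    refine ⟨c, x', h2, ?_⟩
    have : ev π w1 = g := h1.2
    rw [ev_append, this, inv_mul_cancel_left]
  · exact Or.inl ⟨x, c, h1, rfl⟩

lemma exists_word (hπ : IsMEpi π) (g : G) : ∃ n, ∃ w : Word α, w.length = n ∧ ev π w = g := by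
  obtain ⟨w, hw⟩ := hπ.surjective g
  exact ⟨_, FreeMonoid.toList w, rfl, hw⟩

open Classical in
/-- The word length of an element of the group. -/
noncomputable def len (hπ : IsMEpi π) (g : G) : ℕ := Nat.find (exists_word hπ g)

lemma len_spec (hπ : IsMEpi π) (g : G) : ∃ w : Word α, w.length = len hπ g ∧ ev π w = g := by
  classical
  exact Nat.find_spec (exists_word hπ g)

lemma len_le (hπ : IsMEpi π) (w : Word α) : len hπ (ev π w) ≤ w.length := by
  classical
  exact Nat.find_min' _ ⟨w, rfl, rfl⟩

/-- The lengths of the values of the prefixes of a word take all intermediate values. -/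
lemma exists_prefix_len (hπ : IsMEpi π) (w : Word α) (j : ℕ) (hj : j ≤ len hπ (ev π w)) :
    ∃ u u' : Word α, u ++ u' = w ∧ len hπ (ev π u) = j := by
  induction w using List.reverseRecOn with
  | nil =>
    have := len_le hπ ([] : Word α)
    exact ⟨[], [], rfl, by simp only [List.length_nil] at this; omega⟩
  | append_singleton w a ih =>
    by_cases h : j ≤ len hπ (ev π w)
    · obtain ⟨u, u', rfl, h2⟩ := ih h
      exact ⟨u, u' ++ [a], by simp, h2⟩
    · obtain ⟨x, hx, hx'⟩ := len_spec hπ (ev π w)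
      have h1 := len_le hπ (x ++ [a])
      rw [ev_append, hx', ← ev_append, List.length_append, hx, List.length_singleton] at h1
      exact ⟨w ++ [a], [], by simp, by omega⟩

lemma between_proper [Finite α] (hπ : IsMEpi π) (hS : IsStallingsSection π S) (n : ℕ) :
    {g | (between π S g).ncard ≤ n}.Finite := by
  refine ((List.finite_length_le (α × Bool) n).image (ev π)).subset fun g hg => ?_
  obtain ⟨x, hx, hx'⟩ := len_spec hπ g
  refine ⟨x, ?_, hx'⟩
  by_contra hcon
  have hlen : n < len hπ g := by
    rw [← hx]
    simpa using hcon
  obtain ⟨w, hw, hwg⟩ := hS.exists_rep g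
  have hsub : (Finset.range (n + 1) : Set ℕ) ⊆ len hπ '' between π S g := by
    intro j hj
    simp only [Finset.coe_range, Set.mem_Iio] at hj
    obtain ⟨u, u', huu, hu⟩ := exists_prefix_len hπ w j (by rw [hwg]; omega)
    exact ⟨_, ⟨u, u', huu ▸ ⟨hw, hwg⟩, rfl⟩, hu⟩
  have h1 := Set.ncard_le_ncard hsub ((between_finite hS g).image _)
  rw [Set.ncard_coe_finset, Finset.card_range] at h1
  have h2 := Set.ncard_image_le (f := len hπ) (between_finite hS g)
  have : (between π S g).ncard ≤ n := hg
  omega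

theorem HasStallingsSection.virtuallyFree (h : HasStallingsSection G) :
    ∃ F : Subgroup G, IsFreeGroup F ∧ F.FiniteIndex := by
  obtain ⟨α, π, S, hα, hπ, hS⟩ := h
  refine Cuts.virtuallyFree_of_between (p := fun a => π (FreeMonoid.of a)) (fun g => ?_)
    (between π S) (between_finite hS) (between_mul hπ hS) (between_proper hπ hS)
  obtain ⟨-, w, -, hw⟩ := exists_word hπ g
  exact ⟨w, by rw [← ev_eq_prod, hw]⟩

end Forward

end Stallings

/-! ### From virtual freeness to Stallings sections -/

namespace Stallings

section Backward

open FreeGroup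

/-- The local language described by the allowed pairs of consecutive letters, the allowed first
letters and the allowed last letters. -/
def localLang {β : Type} (R : β → β → Prop) (P Q : β → Prop) : Language β :=
  {w | w.IsChain R ∧ (∀ a ∈ w.head?, P a) ∧ ∀ a ∈ w.getLast?, Q a}

lemma isRegular_localLang {β : Type} [Finite β] (R : β → β → Prop) (P Q : β → Prop) :
    (localLang R P Q).IsRegular := by
  set K : Language β := localLang R P Q
  -- a left quotient only depends on the last letter and on one bit of information
  let f : List β → Prop × Option β := fun x => (x.IsChain R ∧ (∀ a ∈ x.head?, P a), x.getLast?)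
  refine Language.IsRegular.of_finite_range_leftQuotient ?_
  have key : ∀ x x', f x = f x' → K.leftQuotient x ⊆ K.leftQuotient x' := by
    intro x x' h y (hy : x ++ y ∈ K)
    have h1 : (x.IsChain R ∧ ∀ a ∈ x.head?, P a) = _ := congrArg Prod.fst h
    have h2 : x.getLast? = x'.getLast? := congrArg Prod.snd h
    obtain ⟨hc, hP, hQ⟩ := hy
    rw [List.isChain_append] at hc
    have hx : x.IsChain R ∧ ∀ a ∈ x.head?, P a := by
      refine ⟨hc.1, fun a ha => hP a ?_⟩
      rw [List.head?_append]
      simp_all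
    obtain ⟨hx1, hx2⟩ := h1 ▸ hx
    refine ⟨List.isChain_append.2 ⟨hx1, hc.2.1, h2 ▸ hc.2.2⟩, ?_, ?_⟩
    · rcases x' with _ | ⟨b, x'⟩
      · have : x = [] := by simpa using h2
        subst this
        exact hP
      · exact hx2
    · rwa [List.getLast?_append, ← h2, ← List.getLast?_append]
  refine Set.Finite.of_finite_image (f := fun L : Language β => f '' {x | K.leftQuotient x = L})
    (Set.toFinite _) ?_
  rintro _ ⟨x, rfl⟩ _ ⟨y, rfl⟩ h
  have hx : f x ∈ f '' {z | K.leftQuotient z = K.leftQuotient y} :=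
    (Set.ext_iff.1 h (f x)).1 ⟨x, rfl, rfl⟩
  obtain ⟨z, hz, hzx⟩ := hx
  rw [← show K.leftQuotient z = K.leftQuotient y from hz]
  exact Set.Subset.antisymm (key _ _ hzx.symm) (key _ _ hzx)

lemma isRegular_of_finite {β : Type} {L : Language β} (h : Set.Finite L) :
    L.IsRegular := by
  -- a left quotient is a set of suffixes of words of the language
  refine Language.IsRegular.of_finite_range_leftQuotient
    ((h.biUnion fun w _ => List.finite_toSet w.tails).finite_subsets.subset ?_)
  rintro _ ⟨x, rfl⟩ y (hy : x ++ y ∈ L)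
  exact Set.mem_biUnion hy ((List.mem_tails _ _).2 (List.suffix_append x y))

lemma redW_eq {α : Type} [DecidableEq α] (w : Word α) : redW w = reduce w := by
  unfold redW
  congr!

lemma wordInv_eq {α : Type} (w : Word α) : wordInv w = invRev w := rfl

/-- The generators of a finitely generated free group form a finite set. -/
lemma finite_of_fg (ι : Type) (h : Group.FG (FreeGroup ι)) : Finite ι := by
  classical
  obtain ⟨s, hs⟩ := Group.fg_def.1 h
  have hfin : (⋃ x ∈ s, {i | i ∈ x.toWord.map Prod.fst}).Finite :=
    s.finite_toSet.biUnion fun x _ => List.finite_toSet _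
  refine Set.finite_univ_iff.1 (hfin.subset fun i _ => ?_)
  by_contra hi
  -- the exponent sum of a generator that does not occur in `s` would vanish
  let φ : FreeGroup ι →* Multiplicative ℤ :=
    FreeGroup.lift fun j => if j = i then Multiplicative.ofAdd 1 else 1
  have hφ : ∀ x ∈ s, φ x = 1 := by
    intro x hx
    have hx' : ∀ j ∈ x.toWord, j.1 ≠ i := by
      rintro j hj rfl
      exact hi (Set.mem_biUnion hx (List.mem_map_of_mem hj))
    rw [← mk_toWord (x := x), lift_mk]
    refine List.prod_eq_one fun y hy => ?_
    obtain ⟨j, hj, rfl⟩ := List.mem_map.1 hy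
    simp [hx' j hj]
  have hker : (⊤ : Subgroup (FreeGroup ι)) ≤ φ.ker := by
    rw [← hs, Subgroup.closure_le]
    exact hφ
  have := hker (Subgroup.mem_top (of i))
  simp [φ, MonoidHom.mem_ker] at this

variable {ι T : Type}

/-- The element `t f t'⁻¹` of the free group on the generators of the free subgroup and the
coset representatives. -/
def tri (t : T) (f : FreeGroup ι) (t' : T) : FreeGroup (ι ⊕ T) :=
  of (Sum.inr t) * FreeGroup.map Sum.inl f * (of (Sum.inr t'))⁻¹

lemma tri_inv (t : T) (f : FreeGroup ι) (t' : T) : (tri t f t')⁻¹ = tri t' f⁻¹ t := by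
  simp [tri, mul_assoc]

lemma tri_mul (t : T) (f : FreeGroup ι) (t' : T) (f' : FreeGroup ι) (t'' : T) :
    tri t f t' * tri t' f' t'' = tri t (f * f') t'' := by
  simp [tri, mul_assoc]

/-- The set of reduced forms of the elements `t f t'⁻¹`. -/
def triLang (ι T : Type) [DecidableEq (ι ⊕ T)] : Language ((ι ⊕ T) × Bool) :=
  {w | ∃ t f t', (tri (ι := ι) (T := T) t f t').toWord = w}

/-- Two letters which may be consecutive in a word of `triLang`. -/
def Follows (a b : (ι ⊕ T) × Bool) : Prop :=
  (a.1 = b.1 → a.2 = b.2) ∧ (∀ t, b ≠ (Sum.inr t, true)) ∧ ∀ t, a ≠ (Sum.inr t, false)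

lemma mk_shape (t t' : T) (m : List (ι × Bool)) :
    FreeGroup.mk ((Sum.inr t, true) :: (m.map fun x => (Sum.inl x.1, x.2)) ++
      [(Sum.inr t', false)]) = tri t (FreeGroup.mk m) t' := by
  rw [tri, map.mk, of, of, inv_mk, mul_mk, mul_mk]
  rfl

/-- Apart from the case of `t t⁻¹`, the word `t f t'⁻¹` is reduced if `f` is. -/
lemma triLang_eq [DecidableEq ι] [DecidableEq (ι ⊕ T)] [Nonempty T] : triLang ι T =
    localLang Follows (fun a => ∃ t, a = (Sum.inr t, true))
      (fun a => ∃ t, a = (Sum.inr t, false)) := by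
  ext w
  constructor
  · rintro ⟨t, f, t', rfl⟩
    by_cases h : f = 1 ∧ t = t'
    · obtain ⟨rfl, rfl⟩ := h
      rw [show tri t (1 : FreeGroup ι) t = 1 by simp [tri], toWord_one]
      exact ⟨List.isChain_nil, by simp, by simp⟩
    · have hch : List.IsChain Follows (((Sum.inr t, true) : (ι ⊕ T) × Bool) ::
          (f.toWord.map fun x => (Sum.inl x.1, x.2)) ++ [(Sum.inr t', false)]) := by
        have hf : f.toWord.IsChain fun a b => a.1 = b.1 → a.2 = b.2 := isReduced_toWord
        have h1 : (f.toWord.map fun x => ((Sum.inl x.1, x.2) : (ι ⊕ T) × Bool)).IsChain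
            Follows := by
          rw [List.isChain_map]
          refine hf.imp fun a b hab => ⟨by simpa using hab, by simp, by simp⟩
        rcases hm : f.toWord with _ | ⟨x, m⟩
        · have : t ≠ t' := fun ht => h ⟨toWord_eq_nil_iff.1 hm, ht⟩
          simp [Follows, this]
        · rw [hm] at h1
          rw [List.cons_append, List.map_cons, List.cons_append, List.isChain_cons_cons]
          refine ⟨⟨by simp, by simp, by simp⟩, ?_⟩
          rw [← List.cons_append, List.isChain_append]
          refine ⟨h1, by simp, ?_⟩
          intro a ha b hb
          rw [← List.map_cons (f := fun x : ι × Bool => ((Sum.inl x.1, x.2) : (ι ⊕ T) × Bool)),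
            List.getLast?_map] at ha
          obtain ⟨c, -, rfl⟩ := Option.mem_map.1 ha
          obtain rfl : _ = b := by simpa using hb
          exact ⟨by simp, by simp, by simp⟩
      have hred : IsReduced (((Sum.inr t, true) : (ι ⊕ T) × Bool) ::
          (f.toWord.map fun x => (Sum.inl x.1, x.2)) ++ [(Sum.inr t', false)]) :=
        hch.imp fun _ _ hab => hab.1
      have hw : (tri t f t').toWord = (Sum.inr t, true) ::
          (f.toWord.map fun x => (Sum.inl x.1, x.2)) ++ [(Sum.inr t', false)] := by
        rw [← mk_toWord (x := f), ← mk_shape, toWord_mk, mk_toWord, hred.reduce_eq]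
      rw [hw]
      refine ⟨hch, ?_, ?_⟩
      · rintro a ha
        exact ⟨t, by simpa using ha.symm⟩
      · rintro a ha
        rw [List.getLast?_append] at ha
        exact ⟨t', by simpa using ha.symm⟩
  · rintro ⟨hc, hP, hQ⟩
    have hred : IsReduced w := hc.imp fun _ _ hab => hab.1
    rcases w with _ | ⟨a, w⟩
    · obtain ⟨t⟩ := ‹Nonempty T›
      exact ⟨t, 1, t, by simp [tri]⟩
    obtain ⟨t, rfl⟩ := hP a rfl
    rcases List.eq_nil_or_concat' w with rfl | ⟨m, b, rfl⟩
    · obtain ⟨t', ht'⟩ := hQ _ rfl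
      simp at ht'
    obtain ⟨t', rfl⟩ := hQ b (by simp [List.getLast?_cons])
    have hm : ∀ x ∈ m, ∃ y : ι × Bool, (Sum.inl y.1, y.2) = x := by
      intro x hx
      obtain ⟨m1, m2, rfl⟩ := List.append_of_mem hx
      have h1 : List.IsChain Follows
          (((Sum.inr t, true) :: m1) ++ (x :: (m2 ++ [(Sum.inr t', false)]))) := by
        simpa using hc
      obtain ⟨-, h2, h3⟩ := List.isChain_append.1 h1
      have h4 := (h3 _ (List.getLast?_eq_some_getLast (List.cons_ne_nil _ _)) x (by simp)).2.1
      have h5 : ∀ s, x ≠ (Sum.inr s, false) := by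
        rcases m2 with _ | ⟨z, m2⟩
        · exact (List.isChain_cons_cons.1 h2).1.2.2
        · exact (List.isChain_cons_cons.1 h2).1.2.2
      rcases x with ⟨i | s, _ | _⟩
      · exact ⟨(i, false), rfl⟩
      · exact ⟨(i, true), rfl⟩
      · exact absurd rfl (h5 s)
      · exact absurd rfl (h4 s)
    obtain ⟨m', rfl⟩ : m ∈ Set.range (List.map fun y : ι × Bool => (Sum.inl y.1, y.2)) := by
      rw [Set.range_list_map]
      exact hm
    refine ⟨t, FreeGroup.mk m', t', ?_⟩
    rw [← mk_shape, toWord_mk]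
    exact hred.reduce_eq

theorem hasStallingsSection_of_virtuallyFree {G : Type} [Group G] (hfg : Group.FG G)
    (F : Subgroup G) [IsFreeGroup F] [F.FiniteIndex] : HasStallingsSection G := by
  classical
  have hFfg : Group.FG F := by
    have := hfg
    exact Subgroup.fg_of_index_ne_zero F
  let ι := IsFreeGroup.Generators F
  let e : F ≃* FreeGroup ι := IsFreeGroup.toFreeGroup F
  have hι : Finite ι := finite_of_fg ι (Group.fg_of_surjective (f := e.toMonoidHom) e.surjective)
  let T := G ⧸ F
  have hT : Finite T := Subgroup.finite_quotient_of_finiteIndex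
  let τ : T → G := Quotient.out
  have hτ : ∀ x : G, x⁻¹ * τ (x : G ⧸ F) ∈ F := fun x => by
    rw [← QuotientGroup.eq]
    exact (QuotientGroup.out_eq' _).symm
  let φ : FreeGroup (ι ⊕ T) →* G :=
    FreeGroup.lift (Sum.elim (fun i => (e.symm (of i) : G)) τ)
  let π : FreeMonoid ((ι ⊕ T) × Bool) →* G := FreeMonoid.lift fun x => φ (FreeGroup.mk [x])
  have hev : ∀ w, ev π w = φ (FreeGroup.mk w) := by
    intro w
    induction w with
    | nil => rw [ev_nil, ← FreeGroup.one_eq_mk, _root_.map_one]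
    | cons a w ih =>
      rw [ev_cons, ih, FreeMonoid.lift_eval_of, ← _root_.map_mul, mul_mk, List.singleton_append]
  have hφF : ∀ f : FreeGroup ι, φ (FreeGroup.map Sum.inl f) = e.symm f := by
    have : φ.comp (FreeGroup.map Sum.inl) = F.subtype.comp e.symm.toMonoidHom := by
      ext i
      simp [φ]
    exact fun f => DFunLike.congr_fun this f
  have hφ : ∀ t f t', φ (tri t f t') = τ t * e.symm f * (τ t')⁻¹ := by
    intro t f t'
    simp [tri, hφF, φ]
  -- the representative starting with a given coset representative
  have hrep : ∀ (g : G) (t : T), ∃ f t', φ (tri t f t') = g := by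
    intro g t
    refine ⟨e ⟨_, hτ (g⁻¹ * τ t)⟩, ((g⁻¹ * τ t : G) : G ⧸ F), ?_⟩
    rw [hφ, MulEquiv.symm_apply_apply]
    simp [mul_assoc]
  have hev' : ∀ k, ev π k.toWord = φ k := fun k => by rw [hev, mk_toWord]
  have hTn : Nonempty T := ⟨((1 : G) : G ⧸ F)⟩
  refine ⟨ι ⊕ T, π, triLang ι T, inferInstance, ⟨fun g => ?_, fun a b => ?_⟩,
    ⟨?_, ?_, ?_, ?_, ?_, ?_⟩⟩
  · obtain ⟨f, t', h⟩ := hrep g hTn.some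
    exact ⟨FreeMonoid.ofList _, (hev' _).trans h⟩
  · rw [FreeMonoid.lift_eval_of, FreeMonoid.lift_eval_of, ← _root_.map_inv, inv_mk]
    rfl
  · rw [triLang_eq]
    exact isRegular_localLang _ _ _
  · rintro _ ⟨t, f, t', rfl⟩
    exact (redW_eq _).trans (reduce_toWord _)
  · rintro _ ⟨t, f, t', rfl⟩
    exact ⟨t', f⁻¹, t, by rw [wordInv_eq, ← toWord_inv, tri_inv]⟩
  · intro g
    obtain ⟨f, t', h⟩ := hrep g hTn.some
    exact ⟨_, ⟨_, _, _, rfl⟩, (hev' _).trans h⟩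
  · -- `f` is determined by `t`, `t'` and the value of `t f t'⁻¹`
    intro g
    refine isRegular_of_finite ?_
    have : Set.Finite {x : T × FreeGroup ι × T | φ (tri x.1 x.2.1 x.2.2) = g} := by
      refine Set.Finite.of_finite_image (f := fun x => (x.1, x.2.2)) (Set.toFinite _) ?_
      rintro ⟨t, f, t'⟩ h ⟨s, f', s'⟩ h' heq
      obtain ⟨rfl, rfl⟩ : t = s ∧ t' = s' := by simpa using heq
      have h1 : φ (tri t f t') = φ (tri t f' t') := h.trans h'.symm
      rw [hφ, hφ] at h1
      have h2 : f = f' := by simpa using h1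
      rw [h2]
    refine (this.image fun x => (tri x.1 x.2.1 x.2.2).toWord).subset ?_
    rintro _ ⟨⟨t, f, t', rfl⟩, h⟩
    exact ⟨(t, f, t'), (hev' _).symm.trans h, rfl⟩
  · rintro g h _ ⟨⟨t, f, t'', rfl⟩, hk⟩
    obtain ⟨f1, t', h1⟩ := hrep g t
    have hmul : tri t f1 t' * tri t' (f1⁻¹ * f) t'' = tri t f t'' := by
      rw [tri_mul, mul_inv_cancel_left]
    have hk' : φ (tri t f t'') = g * h := (hev' _).symm.trans hk
    rw [← hmul, _root_.map_mul, h1, mul_right_inj] at hk'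
    refine ⟨_, Language.mem_mul.2 ⟨_, ⟨⟨t, f1, t', rfl⟩, (hev' _).trans h1⟩, _,
      ⟨⟨t', _, t'', rfl⟩, (hev' _).trans hk'⟩, rfl⟩, ?_⟩
    rw [redW_eq, ← toWord_mul, hmul]

end Backward

end Stallings

open Stallings in
/-- A finitely generated group has a Stallings section if and only
if it is virtually free (has a free subgroup of finite index). -/
theorem hasStallingsSection_iff_virtuallyFree {G : Type} [Group G]
    (hfg : Group.FG G) :
    HasStallingsSection G ↔ ∃ F : Subgroup G, IsFreeGroup F ∧ F.FiniteIndex := by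
  exact ⟨fun h => h.virtuallyFree,
    fun ⟨F, _, _⟩ => hasStallingsSection_of_virtuallyFree hfg F⟩
end

section
/- Every finitely generated virtually free group G has an extendable Stallings section: there exist a finite alphabet A, an m-epi π : Ã* → G, and a Stallings section S for π which is extendable. -/
/-! ### Regularity criteria -/

namespace StallingsProof

open Stallings FreeGroup

section Regular

variable {β : Type}

/-- A language is regular as soon as membership of `u ++ v` depends on `u` only through a map to
a finite type: this is the Myhill–Nerode criterion. -/
theorem regular_of_finite {σ : Type} [Finite σ] (L : Language β) (f : List β → σ)
    (h : ∀ u u', f u = f u' → ∀ v, u ++ v ∈ L → u' ++ v ∈ L) : L.IsRegular := by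
  apply Language.IsRegular.of_finite_range_leftQuotient
  have hfac : Function.FactorsThrough L.leftQuotient f := by
    intro u u' huu
    ext v
    exact ⟨h u u' huu v, h u' u huu.symm v⟩
  rw [Set.finite_coe_iff.symm]
  have : Finite (Set.range f) := inferInstance
  refine Finite.of_surjective
    (fun s : Set.range f => (⟨L.leftQuotient s.2.choose, Set.mem_range_self _⟩ :
      Set.range L.leftQuotient)) ?_
  rintro ⟨_, u, rfl⟩
  refine ⟨⟨f u, u, rfl⟩, Subtype.ext (hfac ?_)⟩
  exact (⟨u, rfl⟩ : ∃ y, f y = f u).choose_spec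

theorem regular_iUnion {ι : Type} [Finite ι] (L : ι → Language β) (h : ∀ i, (L i).IsRegular) :
    Language.IsRegular ({w | ∃ i, w ∈ L i} : Set (List β)) := by
  have hfin : ∀ i, Finite (Set.range (L i).leftQuotient) := fun i =>
    (h i).finite_range_leftQuotient
  refine regular_of_finite (σ := ∀ i, Set.range (L i).leftQuotient) _
    (fun u i => ⟨(L i).leftQuotient u, u, rfl⟩) ?_
  rintro u u' huu v ⟨i, hi⟩
  refine ⟨i, ?_⟩
  have := congrArg Subtype.val (congrFun huu i)
  simp only at this
  rw [← Language.mem_leftQuotient, ← this]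
  exact hi

theorem regular_and {L M : Language β} (hL : L.IsRegular) (hM : M.IsRegular) :
    Language.IsRegular ({w | w ∈ L ∧ w ∈ M} : Set (List β)) := by
  exact hL.inf hM

theorem regular_chain [Finite β] (R : β → β → Prop) :
    Language.IsRegular ({w | w.IsChain R} : Set (List β)) := by
  refine regular_of_finite (σ := Prop × Option β) _ (fun u => (u.IsChain R, u.getLast?)) ?_
  intro u u' huu v huv
  obtain ⟨h1, h2⟩ := Prod.mk.inj huu
  obtain ⟨a, b, c⟩ := List.isChain_append.1 huv
  exact List.isChain_append.2 ⟨h1 ▸ a, b, h2 ▸ c⟩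

/-- Inverse images of regular languages under monoid homomorphisms are regular. -/
theorem regular_preimage {γ : Type} (f : List β → List γ) (hf : ∀ u v, f (u ++ v) = f u ++ f v)
    {L : Language γ} (h : L.IsRegular) :
    Language.IsRegular ({w | f w ∈ L} : Set (List β)) := by
  have hfin : Finite (Set.range L.leftQuotient) := h.finite_range_leftQuotient
  refine regular_of_finite (σ := Set.range L.leftQuotient) _
    (fun u => ⟨L.leftQuotient (f u), _, rfl⟩) ?_
  intro u u' huu v huv
  have := congrArg Subtype.val huu
  simp only at this
  change f (u ++ v) ∈ L at huv
  change f (u' ++ v) ∈ L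
  rw [hf] at huv ⊢
  rw [← Language.mem_leftQuotient, ← this]
  exact huv

theorem regular_subsingleton (L : Set (List β)) (h : L.Subsingleton) :
    Language.IsRegular (L : Language β) := by
  rcases h.eq_empty_or_singleton with rfl | ⟨d, rfl⟩
  · exact regular_of_finite (σ := Unit) _ (fun _ => ()) (fun _ _ _ _ h => h.elim)
  · classical
    refine regular_of_finite (σ := Option (Fin (d.length + 1))) _
      (fun u => if h : u <+: d then some ⟨u.length, Nat.lt_succ_of_le h.length_le⟩ else none) ?_
    intro u u' huu v huv
    have huv : u ++ v = d := huv
    have hu : u <+: d := ⟨v, huv⟩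
    by_cases hu' : u' <+: d
    · simp only [hu, hu', dite_true, Option.some.injEq, Fin.mk.injEq] at huu
      have : u = u' := by
        rw [List.prefix_iff_eq_take.1 hu, List.prefix_iff_eq_take.1 hu', huu]
      exact this ▸ huv
    · simp [hu, hu'] at huu

end Regular

/-! ### Words, free reduction and inverses -/

section Words

variable {α : Type}

theorem wordInv_eq (w : Word α) : wordInv w = invRev w := rfl

theorem mem_Reduced (w : Word α) : w ∈ (Reduced : Language (α × Bool)) ↔ IsReduced w := by
  let := Classical.decEq α
  exact isReduced_iff_reduce_eq.symm

theorem redW_eq_of_mk {w w' : Word α} (h : FreeGroup.mk w = FreeGroup.mk w')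
    (hw' : IsReduced w') : redW w = w' := by
  let := Classical.decEq α
  exact (reduce.sound h).trans hw'.reduce_eq

theorem isReduced_wordInv {w : Word α} (h : IsReduced w) : IsReduced (wordInv w) := by
  let := Classical.decEq α
  rw [isReduced_iff_reduce_eq] at h ⊢
  rw [wordInv_eq, reduce_invRev, h]

theorem wordInv_append (u v : Word α) : wordInv (u ++ v) = wordInv v ++ wordInv u := by
  simp [wordInv]

theorem wordInv_cons (a : α × Bool) (v : Word α) :
    wordInv (a :: v) = wordInv v ++ [letterInv a] := by
  simp [wordInv]

@[simp] theorem wordInv_nil : wordInv ([] : Word α) = [] := rfl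

theorem getLast?_wordInv (w : Word α) : (wordInv w).getLast? = w.head?.map letterInv := by
  simp [wordInv]

theorem mk_wordInv (w : Word α) : FreeGroup.mk (wordInv w) = (FreeGroup.mk w)⁻¹ := by
  rw [wordInv_eq, FreeGroup.inv_mk]

theorem isReduced_append {u v : Word α} : IsReduced (u ++ v) ↔ IsReduced u ∧ IsReduced v ∧
    ∀ a ∈ u.getLast?, ∀ b ∈ v.head?, a.1 = b.1 → a.2 = b.2 :=
  List.isChain_append

/-- Splitting off the longest common prefix of two words. -/
theorem exists_longest_common {γ : Type} : ∀ f f' : List γ, ∃ q r r', f = q ++ r ∧ f' = q ++ r' ∧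
    ∀ a ∈ r.head?, ∀ b ∈ r'.head?, a ≠ b
  | [], f' => ⟨[], [], f', by simp⟩
  | f, [] => ⟨[], f, [], by simp⟩
  | a :: f, b :: f' => by
    by_cases hab : a = b
    · obtain ⟨q, r, r', h1, h2, h3⟩ := exists_longest_common f f'
      exact ⟨a :: q, r, r', by simp [h1], by simp [h2, hab], h3⟩
    · exact ⟨[], a :: f, b :: f', by simpa using hab⟩

/-- If `q ++ r` and `q ++ r'` are reduced and `q` is their longest common prefix, then
`r'⁻¹ r` is reduced. -/
theorem isReduced_wordInv_append {r r' : Word α} (hr : IsReduced r) (hr' : IsReduced r')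
    (h : ∀ a ∈ r.head?, ∀ b ∈ r'.head?, a ≠ b) : IsReduced (wordInv r' ++ r) := by
  rw [isReduced_append]
  refine ⟨isReduced_wordInv hr', hr, ?_⟩
  intro a ha b hb hab
  rw [getLast?_wordInv] at ha
  obtain ⟨c, hc, rfl⟩ := Option.mem_map.1 ha
  have := h b hb c hc
  obtain ⟨b1, b2⟩ := b
  obtain ⟨c1, c2⟩ := c
  simp only [letterInv] at hab ⊢
  subst hab
  cases b2 <;> cases c2 <;> simp_all

/-- Splitting off the maximal power of `y` at the end of a word. -/
theorem exists_strip (y : α × Bool) (f : Word α) : ∃ f' k, f = f' ++ List.replicate k y ∧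
    y ∉ f'.getLast? := by
  induction f using List.reverseRecOn with
  | nil => exact ⟨[], 0, by simp⟩
  | append_singleton l a ih =>
    by_cases hay : a = y
    · subst hay
      obtain ⟨f', k, h1, h2⟩ := ih
      exact ⟨f', k + 1, by rw [h1, List.append_assoc, List.replicate_succ'], h2⟩
    · exact ⟨l ++ [a], 0, by simp, by simpa using hay⟩

theorem isReduced_replicate (n : ℕ) (y : α × Bool) : IsReduced (List.replicate n y) := by
  induction n with
  | zero => simp
  | succ n ih =>
    cases n with
    | zero => simp
    | succ n => simpa [List.replicate_succ, isReduced_cons_cons] using ih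

theorem mk_replicate (n : ℕ) (y : α × Bool) :
    FreeGroup.mk (List.replicate n y) = FreeGroup.mk [y] ^ n := by
  induction n with
  | zero => rfl
  | succ n ih => rw [List.replicate_succ', ← FreeGroup.mul_mk, ih, pow_succ]

/-- If `y` is the last letter of the reduced word `f`, then all `f yⁿ` are reduced, and for
large `n` the conjugate `f yⁿ f⁻¹` has a reduced form with prefix `f`. -/
theorem conj_replicate {f : Word α} (hf : IsReduced f) {y : α × Bool} (hy : y ∈ f.getLast?) :
    (∀ n, IsReduced (f ++ List.replicate n y)) ∧
    ∃ N, ∀ n ≥ N, ∃ z, IsReduced (f ++ z) ∧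
      FreeGroup.mk (f ++ z) = FreeGroup.mk (f ++ List.replicate n y ++ wordInv f) := by
  constructor
  · intro n
    rw [isReduced_append]
    refine ⟨hf, isReduced_replicate n y, ?_⟩
    intro a ha b hb _
    rw [Option.mem_unique ha hy, List.eq_of_mem_replicate (List.mem_of_mem_head? hb)]
  · obtain ⟨f', k, rfl, hk⟩ := exists_strip y f
    have hk0 : k ≠ 0 := by
      rintro rfl
      simp at hy hk
      exact hk hy
    refine ⟨k, fun n hn => ⟨List.replicate (n - k) y ++ wordInv f', ?_, ?_⟩⟩
    · have e : f' ++ List.replicate k y ++ (List.replicate (n - k) y ++ wordInv f')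
          = f' ++ (List.replicate n y ++ wordInv f') := by
        rw [List.append_assoc, ← List.append_assoc (List.replicate k y),
          List.replicate_append_replicate, Nat.add_sub_cancel' hn]
      have hn0 : n ≠ 0 := by omega
      rw [e]
      obtain ⟨h1, -, h3⟩ := isReduced_append.1 hf
      have hh : (List.replicate k y).head? = some y := by
        cases k with
        | zero => exact absurd rfl hk0
        | succ k => rfl
      have hl : (List.replicate n y).getLast? = some y := by
        rw [List.getLast?_replicate, if_neg hn0]
      have hh' : (List.replicate n y).head? = some y := by
        rw [List.head?_replicate, if_neg hn0]
      rw [isReduced_append]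
      refine ⟨h1, ?_, ?_⟩
      · rw [isReduced_append]
        refine ⟨isReduced_replicate n y, isReduced_wordInv h1, ?_⟩
        intro a ha b hb hab
        rw [hl] at ha
        obtain rfl : y = a := by simpa using ha
        -- the first letter of `f'⁻¹` is `c⁻¹`, where `c ≠ y` is the last letter of `f'`
        have hb' : b ∈ f'.getLast?.map letterInv := by
          simpa [wordInv, List.head?_reverse] using hb
        obtain ⟨c, hc, rfl⟩ := Option.mem_map.1 hb'
        have hcy : c ≠ y := fun h => hk (h ▸ hc)
        obtain ⟨c1, c2⟩ := c
        obtain ⟨y1, y2⟩ := y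
        simp only [letterInv] at hab ⊢
        subst hab
        cases c2 <;> cases y2 <;> simp_all
      · intro a ha b hb
        rw [List.head?_append_of_ne_nil _ (by simpa using hn0), hh'] at hb
        exact h3 a ha b (hh ▸ hb)
    · obtain ⟨m, rfl⟩ := Nat.exists_eq_add_of_le hn
      simp only [← FreeGroup.mul_mk, wordInv_append, mk_wordInv, Nat.add_sub_cancel_left,
        mk_replicate]
      group

end Words

end StallingsProof

namespace StallingsProof

open Stallings FreeGroup

/-! ### Paths in the tree with jumps -/

section Paths

variable {X B : Type}

/-- The alphabet: a basis `X` of the free subgroup, together with three copies `(b, 0)`, `(b, 1)`,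
`(b, 2)` of every coset representative `b ∈ B`. -/
abbrev Gen (X B : Type) : Type := X ⊕ (B × Fin 3)

/-- The place where a letter starts: `none` stands for the free subgroup and `some b` for
its coset `F b`. Basis letters stay at `none`, and `(b, i)` leads from `none` to `some b`. -/
def src : Gen X B × Bool → Option B
  | (Sum.inl _, _) => none
  | (Sum.inr _, true) => none
  | (Sum.inr p, false) => some p.1

/-- The place where a letter ends. -/
def tgt : Gen X B × Bool → Option B
  | (Sum.inl _, _) => none
  | (Sum.inr p, true) => some p.1
  | (Sum.inr _, false) => none

/-- Which of the three copies a coset letter belongs to (`none` for basis letters). -/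
def idx : Gen X B × Bool → Option (Fin 3)
  | (Sum.inl _, _) => none
  | (Sum.inr p, _) => some p.2

@[simp] theorem idx_letterInv (a : Gen X B × Bool) : idx (letterInv a) = idx a := by
  obtain ⟨x | p, _ | _⟩ := a <;> rfl

/-- The basis letter underlying a letter, if it has one. -/
def toX : Gen X B × Bool → Option (X × Bool)
  | (Sum.inl x, e) => some (x, e)
  | (Sum.inr _, _) => none

/-- The inclusion of the basis letters. -/
def emb (a : X × Bool) : Gen X B × Bool := (Sum.inl a.1, a.2)

/-- Deletion of all coset letters from a word. -/
def del (w : Word (Gen X B)) : Word X := w.filterMap toX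

/-- `IsPath p w q`: the word `w` labels a path from the place `p` to the place `q`. -/
def IsPath : Option B → Word (Gen X B) → Option B → Prop
  | p, [], q => p = q
  | p, a :: w, q => src a = p ∧ IsPath (tgt a) w q

@[simp] theorem isPath_nil (p q : Option B) : IsPath (X := X) p [] q ↔ p = q := Iff.rfl

@[simp] theorem isPath_cons (p q : Option B) (a : Gen X B × Bool) (w : Word (Gen X B)) :
    IsPath p (a :: w) q ↔ src a = p ∧ IsPath (tgt a) w q := Iff.rfl

theorem isPath_append {u v : Word (Gen X B)} {p r : Option B} :
    IsPath p (u ++ v) r ↔ ∃ q, IsPath p u q ∧ IsPath q v r := by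
  induction u generalizing p with
  | nil => simp
  | cons a u ih => simp [ih, and_assoc]

@[simp] theorem src_letterInv (a : Gen X B × Bool) : src (letterInv a) = tgt a := by
  obtain ⟨x | p, _ | _⟩ := a <;> rfl

@[simp] theorem tgt_letterInv (a : Gen X B × Bool) : tgt (letterInv a) = src a := by
  obtain ⟨x | p, _ | _⟩ := a <;> rfl

theorem isPath_wordInv {w : Word (Gen X B)} {p q : Option B} (h : IsPath p w q) :
    IsPath q (wordInv w) p := by
  induction w generalizing p with
  | nil => exact h.symm
  | cons a w ih =>
    rw [wordInv_cons, isPath_append]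
    exact ⟨tgt a, ih h.2, by simpa using h.1⟩

theorem isPath_emb (d : Word X) : IsPath (none : Option B) (d.map emb) none := by
  induction d with
  | nil => rfl
  | cons a d ih => exact ⟨rfl, ih⟩

@[simp] theorem del_nil : del ([] : Word (Gen X B)) = [] := rfl

@[simp] theorem del_append (u v : Word (Gen X B)) : del (u ++ v) = del u ++ del v := by
  simp [del]

@[simp] theorem del_emb (d : Word X) : del (d.map (emb (B := B))) = d := by
  induction d with
  | nil => rfl
  | cons a d ih => simpa [del, emb, toX] using ih

@[simp] theorem del_cons_inr (p : B × Fin 3) (e : Bool) (w : Word (Gen X B)) :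
    del ((Sum.inr p, e) :: w) = del w :=
  List.filterMap_cons_none rfl

@[simp] theorem del_cons_inl (x : X) (e : Bool) (w : Word (Gen X B)) :
    del ((Sum.inl x, e) :: w) = (x, e) :: del w := by
  simp [del, toX]

theorem del_wordInv (w : Word (Gen X B)) : del (wordInv w) = wordInv (del w) := by
  induction w with
  | nil => rfl
  | cons a w ih =>
    rw [wordInv_cons, del_append, ih]
    obtain ⟨x | p, e⟩ := a
    · simp [wordInv_cons, letterInv]
    · simp [letterInv]

/-- Concatenation keeps words reduced when it does so after deletion of the coset letters and
the two letters that meet are not coset letters of the same copy. -/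
theorem isReduced_join {u v : Word (Gen X B)} (hu : IsReduced u) (hv : IsReduced v)
    (hd : IsReduced (del u ++ del v))
    (hi : ∀ a ∈ u.getLast?, ∀ b ∈ v.head?, idx a = none ∨ idx a ≠ idx b) :
    IsReduced (u ++ v) := by
  rw [isReduced_append]
  refine ⟨hu, hv, ?_⟩
  intro a ha b hb hab
  have hi := hi a ha b hb
  obtain ⟨u, rfl⟩ : ∃ u', u = u' ++ [a] := by
    obtain ⟨h, rfl⟩ := List.mem_getLast?_eq_getLast ha
    exact ⟨_, (List.dropLast_append_getLast h).symm⟩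
  obtain ⟨v, rfl⟩ : ∃ v', v = b :: v' := ⟨_, (List.cons_head?_tail hb).symm⟩
  obtain ⟨x | p, e⟩ := a
  · obtain ⟨y, e'⟩ := b
    obtain rfl : Sum.inl x = y := hab
    have := (isReduced_append.1 hd).2.2
    simpa using this
  · obtain ⟨y, e'⟩ := b
    obtain rfl : Sum.inr p = y := hab
    simp [idx] at hi

/-- A path starting in the free subgroup and ending outside can be cut at any prefix
of its trace in the free group. -/
theorem exists_cut (b : B) (q r : Word X) (w : Word (Gen X B)) (hw : IsPath none w (some b))
    (hd : del w = q ++ r) : ∃ w₁ w₂, w = w₁ ++ w₂ ∧ IsPath none w₁ none ∧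
      IsPath none w₂ (some b) ∧ del w₁ = q ∧ del w₂ = r := by
  induction q generalizing w with
  | nil => exact ⟨[], w, rfl, rfl, hw, rfl, hd⟩
  | cons x q ih =>
    obtain ⟨m, a, w', rfl, hm, ha, hw'⟩ := List.filterMap_eq_cons_iff.1 hd
    obtain ⟨y | p, e⟩ := a
    · obtain rfl : (y, e) = x := by simpa [toX] using ha
      obtain ⟨s, hs, h1, h2⟩ := isPath_append.1 hw
      obtain rfl : none = s := h1
      obtain ⟨w₁, w₂, rfl, k1, k2, k3, k4⟩ := ih w' h2 hw'
      have hm' : del m = [] := by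
        rw [del, List.filterMap_eq_nil_iff]
        exact hm
      refine ⟨m ++ (Sum.inl y, e) :: w₁, w₂, by simp, ?_, k2, by simp [k3, hm'], k4⟩
      exact isPath_append.2 ⟨none, hs, rfl, k1⟩
    · simp [toX] at ha

/-- The words that label a path from the place `c` to the place `b` outside the free subgroup,
are reduced, and have a reduced trace in the free group. -/
def Good (c b : B) (w : Word (Gen X B)) : Prop :=
  IsPath (some c) w (some b) ∧ IsReduced w ∧ IsReduced (del w)

/-- The section: the union of the languages `Good c b`. -/
def sec (X B : Type) : Language (Gen X B × Bool) := {w : Word (Gen X B) | ∃ c b, Good c b w}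

theorem Good.inv {c b : B} {w : Word (Gen X B)} (h : Good c b w) : Good b c (wordInv w) :=
  ⟨isPath_wordInv h.1, isReduced_wordInv h.2.1, by
    rw [del_wordInv]; exact isReduced_wordInv h.2.2⟩

theorem isReduced_emb {d : Word X} (h : IsReduced d) : IsReduced (d.map (emb (B := B))) := by
  rw [FreeGroup.IsReduced, List.isChain_map]
  refine List.IsChain.imp ?_ h
  intro a b hab h
  exact hab (Sum.inl_injective h)

/-- The word `d b`, running along `d` in the free subgroup and then jumping out. -/
def out (d : Word X) (p : B × Fin 3) : Word (Gen X B) := d.map emb ++ [(Sum.inr p, true)]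

theorem isPath_out (d : Word X) (p : B × Fin 3) : IsPath none (out d p) (some p.1) :=
  isPath_append.2 ⟨none, isPath_emb d, rfl, rfl⟩

@[simp] theorem del_out (d : Word X) (p : B × Fin 3) : del (out d p) = d := by
  simp [out]

theorem isReduced_out {d : Word X} (h : IsReduced d) (p : B × Fin 3) : IsReduced (out d p) := by
  refine isReduced_join (isReduced_emb h) (by simp) (by simpa using h) ?_
  intro a ha b hb
  left
  have := List.mem_of_mem_getLast? ha
  obtain ⟨x, -, rfl⟩ := List.mem_map.1 this
  rfl

theorem idx_head_out (d : Word X) (p : B × Fin 3) : ∀ a ∈ (out d p).head?,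
    idx a = none ∨ idx a = some p.2 := by
  cases d with
  | nil => simp [out, idx]
  | cons x d => simp [out, idx, emb]

theorem idx_getLast_out (d : Word X) (p : B × Fin 3) : ∀ a ∈ (out d p).getLast?,
    idx a = some p.2 := by
  simp [out, idx]

/-- If the path `w₁` ends in the free subgroup, then it can be continued by any reduced `d` that
does not cancel with its trace, followed by a jump through a copy that `w₁` did not just use. -/
theorem isReduced_append_out {w₁ : Word (Gen X B)} {d : Word X} {p : B × Fin 3}
    (h₁ : IsReduced w₁) (hd : IsReduced (del w₁ ++ d))
    (hi : ∀ a ∈ w₁.getLast?, some p.2 ≠ idx a) : IsReduced (w₁ ++ out d p) := by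
  refine isReduced_join h₁ (isReduced_out (isReduced_append.1 hd).2.1 p) (by simpa using hd) ?_
  intro a ha b hb
  rcases idx_head_out d p b hb with h | h
  · rcases h' : idx a with _ | i
    · exact Or.inl rfl
    · right; rw [h]; simp
  · right; rw [h]; exact (hi a ha).symm

theorem exists_index (a b : Option (Fin 3)) : ∃ j : Fin 3, some j ≠ a ∧ some j ≠ b := by
  revert a b
  decide

/-- The word `b⁻¹ d c`, which enters the free subgroup from the place `b`, runs along `d` and
leaves to the place `c`. -/
def visit (p : B × Fin 3) (d : Word X) (p' : B × Fin 3) : Word (Gen X B) :=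
  (Sum.inr p, false) :: out d p'

theorem good_visit {p p' : B × Fin 3} (hp : p.2 ≠ p'.2) {d : Word X} (hd : IsReduced d) :
    Good p.1 p'.1 (visit p d p') := by
  refine ⟨⟨rfl, isPath_out d p'⟩, ?_, by simpa [visit] using hd⟩
  have := isReduced_append_out (w₁ := [(Sum.inr p, false)]) (d := d) (p := p') (by simp)
    (by simpa using hd) (by simpa [idx] using hp.symm)
  simpa [visit] using this

@[simp] theorem del_visit (p p' : B × Fin 3) (d : Word X) : del (visit p d p') = d := by
  simp [visit]

theorem getLast_visit (p p' : B × Fin 3) (d : Word X) :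
    ∀ a ∈ (visit p d p').getLast?, idx a = some p'.2 := by
  rw [visit, out, ← List.cons_append, List.getLast?_append]
  simp [idx]

/-- Continuing a path that left through one copy by re-entering through another copy. -/
theorem good_append_visit {c b : B} {u : Word (Gen X B)} (hu : Good c b u) {i : Fin 3}
    (hi : ∀ a ∈ u.getLast?, idx a ≠ some i) {p' : B × Fin 3} (hp : i ≠ p'.2) {d : Word X}
    (hd : IsReduced (del u ++ d)) : Good c p'.1 (u ++ visit (b, i) d p') := by
  have hv : Good b p'.1 (visit (b, i) d p') := good_visit hp (isReduced_append.1 hd).2.1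
  refine ⟨isPath_append.2 ⟨_, hu.1, hv.1⟩, ?_, by simpa using hd⟩
  refine isReduced_join hu.2.1 hv.2.1 (by simpa using hd) ?_
  intro a ha a' ha'
  right
  simp only [visit, List.head?_cons, Option.mem_some_iff] at ha'
  subst ha'
  exact hi a ha

/-- The combinatorial form of `S_{gh} ⊆ (S_g S_h)‾`: every `w` splits through a path with
prescribed trace `f'` and prescribed final place `b'`. -/
theorem exists_split {c b : B} {w : Word (Gen X B)} (hw : Good c b w) {f' : Word X}
    (hf' : IsReduced f') (b' : B) : ∃ s s', Good c b' s ∧ Good b' b s' ∧ del s = f' ∧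
      FreeGroup.mk (s ++ s') = FreeGroup.mk w := by
  rcases w with _ | ⟨a, w⟩
  · obtain rfl : c = b := Option.some_injective _ hw.1
    have hs : Good c b' (visit (c, 0) f' (b', 1)) := good_visit (by simp) hf'
    refine ⟨_, _, hs, hs.inv, by simp, ?_⟩
    rw [← FreeGroup.mul_mk, mk_wordInv, mul_inv_cancel]
    rfl
  · obtain ⟨⟨ha, hp⟩, hr, hd⟩ := hw
    obtain ⟨x | ⟨c', i⟩, _ | _⟩ := a <;> simp only [src, reduceCtorEq, Option.some.injEq] at ha
    subst ha
    rw [del_cons_inr] at hd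
    obtain ⟨q, r, r', h1, rfl, h3⟩ := exists_longest_common (del w) f'
    obtain ⟨w₁, w₂, rfl, k1, k2, k3, k4⟩ := exists_cut b q r w hp h1
    set w₀ : Word (Gen X B) := (Sum.inr (c', i), false) :: w₁ with hw₀
    have e : (Sum.inr (c', i), false) :: (w₁ ++ w₂) = w₀ ++ w₂ := rfl
    rw [e] at hr ⊢
    obtain ⟨hr1, hr2, -⟩ := isReduced_append.1 hr
    have hdr : IsReduced r := (isReduced_append.1 (h1 ▸ hd)).2.1
    have hdr' : IsReduced r' := (isReduced_append.1 hf').2.1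
    -- the third copy serves to avoid the coset letters on both sides of the cut
    obtain ⟨j, hj1, hj2⟩ := exists_index (w₀.getLast?.bind idx) (w₂.head?.bind idx)
    have hdel : del w₀ = q := by simp [hw₀, k3]
    refine ⟨w₀ ++ out r' (b', j), wordInv (out r' (b', j)) ++ w₂, ⟨?_, ?_, ?_⟩, ⟨?_, ?_, ?_⟩,
      ?_, ?_⟩
    · exact isPath_append.2 ⟨none, ⟨rfl, k1⟩, isPath_out _ _⟩
    · refine isReduced_append_out hr1 (by rwa [hdel]) ?_
      intro a ha
      rw [Option.mem_def.1 ha] at hj1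
      exact hj1
    · simpa [hdel] using hf'
    · exact isPath_append.2 ⟨none, isPath_wordInv (isPath_out _ _), k2⟩
    · -- this is the inverse of `w₂⁻¹` continued by `out r' (b', j)`
      have : IsReduced (wordInv w₂ ++ out r' (b', j)) := by
        refine isReduced_append_out (isReduced_wordInv hr2) ?_ ?_
        · rw [del_wordInv, k4]
          exact isReduced_wordInv_append hdr' hdr (fun a ha b hb => (h3 b hb a ha).symm)
        · intro a ha
          rw [getLast?_wordInv] at ha
          obtain ⟨a', ha', rfl⟩ := Option.mem_map.1 ha
          rw [Option.mem_def.1 ha'] at hj2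
          rw [idx_letterInv]
          exact hj2
      have := isReduced_wordInv this
      rw [wordInv_append] at this
      rwa [wordInv_eq (wordInv w₂), wordInv_eq w₂, invRev_invRev] at this
    · rw [del_append, del_wordInv, del_out, k4]
      exact isReduced_wordInv_append hdr hdr' h3
    · simp [hdel]
    · simp only [← FreeGroup.mul_mk, mk_wordInv]
      group

/-- The choice of the direction `d` along which a path with trace `f` is extended: the last letter
of `f`, or the empty word if `f` is empty. -/
theorem exists_direction {f : Word X} (hf : IsReduced f) : ∃ d : Word X,
    (∀ n, IsReduced (f ++ (List.replicate n d).flatten)) ∧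
    ∃ N, ∀ n ≥ N, ∃ z, IsReduced (f ++ z) ∧
      FreeGroup.mk (f ++ z) = FreeGroup.mk f * FreeGroup.mk d ^ n * (FreeGroup.mk f)⁻¹ := by
  rcases hy : f.getLast? with _ | y
  · rw [List.getLast?_eq_none_iff] at hy
    subst hy
    refine ⟨[], by simp, 0, fun n _ => ⟨[], by simp, ?_⟩⟩
    simp [← FreeGroup.one_eq_mk]
  · obtain ⟨h1, N, h2⟩ := conj_replicate hf hy
    refine ⟨[y], fun n => ?_, N, fun n hn => ?_⟩
    · have : (List.replicate n [y]).flatten = List.replicate n y := by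
        simp
      rw [this]
      exact h1 n
    · obtain ⟨z, hz, hz'⟩ := h2 n hn
      refine ⟨z, hz, hz'.trans ?_⟩
      simp only [← FreeGroup.mul_mk, mk_wordInv, mk_replicate]

theorem good_append_pow {c b : B} {i j : Fin 3} (hij : i ≠ j) {d : Word X} (n : ℕ)
    {u : Word (Gen X B)} (hu : Good c b u) (hi : ∀ a ∈ u.getLast?, idx a ≠ some i)
    (hd : ∀ m, IsReduced (del u ++ (List.replicate m d).flatten)) :
    Good c b (u ++ (List.replicate n (visit (b, i) d (b, j))).flatten) := by
  induction n generalizing u with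
  | zero => simpa using hu
  | succ n ih =>
    rw [List.replicate_succ, List.flatten_cons, ← List.append_assoc]
    refine ih ?_ ?_ ?_
    · exact good_append_visit hu hi hij (by simpa using hd 1)
    · intro a ha
      rw [List.getLast?_append_of_ne_nil _ (by simp [visit])] at ha
      rw [getLast_visit _ _ _ a ha]
      simpa using hij.symm
    · intro m
      simpa [List.replicate_succ] using hd (m + 1)

/-- The combinatorial form of extendability: `u` is continued by jumping back into the free
subgroup through a copy that `u` did not just use, following there the direction of
`exists_direction`, and leaving through another copy. -/
theorem exists_extension {c b : B} {u : Word (Gen X B)} (hu : Good c b u) :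
    ∃ v : Word (Gen X B), Good b b v ∧
      (∀ n : ℕ, Good c b (u ++ (List.replicate n v).flatten)) ∧
      ∃ N : ℕ, ∀ n ≥ N, ∃ t, Good c c (u ++ t) ∧ FreeGroup.mk (del (u ++ t)) =
        FreeGroup.mk (del u) * FreeGroup.mk (del v) ^ n * (FreeGroup.mk (del u))⁻¹ := by
  obtain ⟨d, h1, N, h2⟩ := exists_direction hu.2.2
  obtain ⟨i, hi, -⟩ := exists_index (u.getLast?.bind idx) none
  obtain ⟨j, hj, -⟩ := exists_index (some i) none
  have hij : i ≠ j := fun h => hj (by rw [h])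
  have hi' : ∀ a ∈ u.getLast?, idx a ≠ some i := by
    intro a ha
    rw [Option.mem_def.1 ha] at hi
    exact hi.symm
  have hd : IsReduced d := by
    have := h1 1
    simp only [List.replicate_one, List.flatten_cons, List.flatten_nil, List.append_nil] at this
    exact (isReduced_append.1 this).2.1
  refine ⟨visit (b, i) d (b, j), good_visit hij hd,
    fun n => good_append_pow hij n hu hi' h1, N, fun n hn => ?_⟩
  obtain ⟨z, hz, hz'⟩ := h2 n hn
  exact ⟨visit (b, i) z (c, j), good_append_visit hu hi' hij hz, by simpa using hz'⟩

theorem regular_isPath [Finite B] (p q : Option B) :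
    Language.IsRegular ({w | IsPath p w q} : Set (Word (Gen X B))) := by
  refine regular_of_finite (σ := Set (Option B)) _ (fun u => {r | IsPath p u r}) ?_
  intro u u' huu v huv
  obtain ⟨r, h1, h2⟩ := isPath_append.1 huv
  exact isPath_append.2 ⟨r, (Set.ext_iff.1 huu r).1 h1, h2⟩

theorem regular_good_inter [Finite X] [Finite B] (c b : B) {L : Language (X × Bool)}
    (hL : L.IsRegular) :
    Language.IsRegular ({w | Good c b w ∧ del w ∈ L} : Set (Word (Gen X B))) := by
  have h1 := regular_isPath (X := X) (some c) (some b)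
  have h2 : Language.IsRegular ({w | IsReduced w} : Set (Word (Gen X B))) := regular_chain _
  have h3 : Language.IsRegular ({w | IsReduced w} : Set (Word X)) := regular_chain _
  have h4 := regular_preimage (del (X := X) (B := B)) del_append (regular_and h3 hL)
  refine (congrArg Language.IsRegular (Set.ext fun w => ?_)).mp
    (regular_and h1 (regular_and h2 h4))
  symm
  constructor
  · rintro ⟨⟨a, b, c⟩, d⟩
    exact ⟨a, b, c, d⟩
  · rintro ⟨a, b, c, d⟩
    exact ⟨⟨a, b, c⟩, d⟩

end Paths

end StallingsProof

namespace StallingsProof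

open Stallings FreeGroup

/-! ### The section in the group -/

section Group

variable {X B G : Type} [Group G]

/-- A finitely generated free group has finite bases: each of finitely many generators has a
nonzero exponent sum in only finitely many letters. -/
theorem finite_of_fg (h : Group.FG (FreeGroup X)) : Finite X := by
  classical
  let e : X → FreeGroup X →* Multiplicative ℤ := fun x =>
    FreeGroup.lift fun y => Multiplicative.ofAdd (if y = x then 1 else 0)
  have hfin : ∀ s : FreeGroup X, {x | e x s ≠ 1}.Finite := by
    intro s
    induction s using FreeGroup.induction_on with
    | C1 => simp
    | of y =>
      refine (Set.finite_singleton y).subset ?_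
      intro x hx
      by_contra hxy
      have : y ≠ x := fun h => hxy h.symm
      exact hx (by simp [e, this])
    | inv_of y ih => simpa using ih
    | mul a b iha ihb =>
      refine (iha.union ihb).subset ?_
      intro x hx
      by_contra hn
      simp only [Set.mem_union, Set.mem_ofPred_eq, not_or, not_not] at hn
      exact hx (by rw [_root_.map_mul, hn.1, hn.2, one_mul])
  obtain ⟨S, hS, hSf⟩ := Group.fg_iff.1 h
  have hU : (⋃ s ∈ S, {x | e x s ≠ 1}).Finite := hSf.biUnion fun s _ => hfin s
  refine Set.finite_univ_iff.1 (hU.subset ?_)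
  intro x _
  by_contra hx
  simp only [Set.mem_iUnion, Set.mem_ofPred_eq, not_exists, not_not] at hx
  have hker : Subgroup.closure S ≤ (e x).ker := (Subgroup.closure_le _).2 fun s hs => hx s hs
  have : FreeGroup.of x ∈ (e x).ker := hker (hS ▸ Subgroup.mem_top _)
  rw [MonoidHom.mem_ker] at this
  simp [e] at this

/-- The value of a generator. -/
def gval (φ : FreeGroup X →* G) (β : B → G) : Gen X B → G
  | Sum.inl x => φ (FreeGroup.of x)
  | Sum.inr p => β p.1

/-- The coset representative of a place. -/
def bval (β : B → G) : Option B → G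
  | none => 1
  | some b => β b

/-- The matched epimorphism. -/
def epi (φ : FreeGroup X →* G) (β : B → G) : FreeMonoid (Gen X B × Bool) →* G :=
  FreeMonoid.lift fun a => FreeGroup.lift (gval φ β) (FreeGroup.mk [a])

variable (φ : FreeGroup X →* G) (β : B → G)

theorem ev_epi (w : Word (Gen X B)) :
    ev (epi φ β) w = FreeGroup.lift (gval φ β) (FreeGroup.mk w) := by
  induction w with
  | nil => simp [ev, ← FreeGroup.one_eq_mk]
  | cons a w ih =>
    have h1 : ev (epi φ β) (a :: w) = ev (epi φ β) [a] * ev (epi φ β) w := by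
      rw [ev, ev, ev, ← _root_.map_mul]
      rfl
    have h2 : FreeGroup.mk (a :: w) = FreeGroup.mk [a] * FreeGroup.mk w := by
      rw [FreeGroup.mul_mk]; rfl
    rw [h1, h2, _root_.map_mul, ih]
    rfl

theorem lift_path {p q : Option B} {w : Word (Gen X B)} (h : IsPath p w q) :
    FreeGroup.lift (gval φ β) (FreeGroup.mk w) =
      (bval β p)⁻¹ * φ (FreeGroup.mk (del w)) * bval β q := by
  induction w generalizing p with
  | nil =>
    obtain rfl : p = q := h
    simp [← FreeGroup.one_eq_mk]
  | cons a w ih =>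
    obtain ⟨rfl, h⟩ := h
    have h2 : ∀ {Y : Type} (a : Y × Bool) (w : Word Y),
        FreeGroup.mk (a :: w) = FreeGroup.mk [a] * FreeGroup.mk w := by
      intro Y a w
      rw [FreeGroup.mul_mk]; rfl
    rw [h2, _root_.map_mul, ih h]
    obtain ⟨x | p, _ | _⟩ := a
    · have : FreeGroup.mk [(x, false)] = (FreeGroup.of x)⁻¹ := rfl
      rw [del_cons_inl, h2 (x, false), _root_.map_mul, this]
      simp [tgt, src, bval, gval, mul_assoc]
    · have : FreeGroup.mk [(x, true)] = FreeGroup.of x := rfl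
      rw [del_cons_inl, h2 (x, true), _root_.map_mul, this]
      simp [tgt, src, bval, gval, mul_assoc]
    · simp [tgt, src, bval, gval, mul_assoc]
    · simp [tgt, src, bval, gval, mul_assoc]

theorem ev_good {c b : B} {w : Word (Gen X B)} (h : Good c b w) :
    ev (epi φ β) w = (β c)⁻¹ * φ (FreeGroup.mk (del w)) * β b := by
  rw [ev_epi, lift_path φ β h.1]
  rfl

variable {φ β}

theorem exists_trace (hβ : ∀ g, ∃ b f, g = φ f * β b) (c : B) (g : G) :
    ∃ b, ∃ d : Word X, IsReduced d ∧ g = (β c)⁻¹ * φ (FreeGroup.mk d) * β b := by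
  classical
  obtain ⟨b, f, hf⟩ := hβ (β c * g)
  refine ⟨b, f.toWord, isReduced_toWord, ?_⟩
  rw [mk_toWord, mul_assoc, ← hf, inv_mul_cancel_left]

theorem isStallings [Finite X] [Finite B] (hφ : Function.Injective φ)
    (hβ : ∀ g, ∃ b f, g = φ f * β b) : IsStallingsSection (epi φ β) (sec X B) where
  regular := by
    have h : ∀ c b : B, Language.IsRegular
        ({w | Good c b w ∧ del w ∈ (⊤ : Language (X × Bool))} : Set (Word (Gen X B))) :=
      fun c b => regular_good_inter c b (regular_of_finite (σ := Unit) _ (fun _ => ())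
        (fun _ _ _ _ _ => trivial))
    refine (congrArg Language.IsRegular (Set.ext fun w => ?_)).mp
      (regular_iUnion _ fun c => regular_iUnion _ fun b => h c b)
    constructor
    · rintro ⟨c, b, h, -⟩
      exact ⟨c, b, h⟩
    · rintro ⟨c, b, h⟩
      exact ⟨c, b, h, trivial⟩
  reduced := by
    rintro w ⟨c, b, h⟩
    exact (mem_Reduced w).2 h.2.1
  inv_mem := by
    rintro w ⟨c, b, h⟩
    exact ⟨b, c, h.inv⟩
  exists_rep := by
    intro g
    obtain ⟨c, -⟩ := hβ 1
    obtain ⟨b, d, hd, hg⟩ := exists_trace hβ c g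
    have h : Good c b (visit (c, 0) d (b, 1)) := good_visit (by simp) hd
    exact ⟨_, ⟨c, b, h⟩, by rw [ev_good φ β h, del_visit, hg]⟩
  s1 := by
    intro g
    -- for given ends, at most one reduced trace yields the value `g`
    have hs : ∀ c b : B, Set.Subsingleton
        {d : Word X | IsReduced d ∧ (β c)⁻¹ * φ (FreeGroup.mk d) * β b = g} := by
      rintro c b d ⟨hd, hdg⟩ d' ⟨hd', hdg'⟩
      have : FreeGroup.mk d = FreeGroup.mk d' :=
        hφ (mul_left_cancel (mul_right_cancel (hdg.trans hdg'.symm)))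
      rw [← redW_eq_of_mk this hd', redW_eq_of_mk rfl hd]
    refine (congrArg Language.IsRegular (Set.ext fun w => ?_)).mp
      (regular_iUnion _ fun c => regular_iUnion _ fun b =>
        regular_good_inter c b (regular_subsingleton _ (hs c b)))
    constructor
    · rintro ⟨c, b, h, -, hg⟩
      exact ⟨⟨c, b, h⟩, (ev_good φ β h).trans hg⟩
    · rintro ⟨⟨c, b, h⟩, hg⟩
      exact ⟨c, b, h, h.2.2, (ev_good φ β h).symm.trans hg⟩
  s2 := by
    rintro g h w ⟨⟨c, b, hw⟩, hgh⟩
    obtain ⟨b', d, hd, hg⟩ := exists_trace hβ c g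
    obtain ⟨s, s', hs, hs', hds, hmk⟩ := exists_split hw hd b'
    have e : ev (epi φ β) s = g := by rw [ev_good φ β hs, hds, hg]
    have e' : ev (epi φ β) s' = h := by
      have h1 : ev (epi φ β) s * ev (epi φ β) s' = g * h := by
        rw [ev_epi, ev_epi, ← _root_.map_mul, FreeGroup.mul_mk, hmk, ← ev_epi]
        exact hgh
      rw [e] at h1
      exact mul_left_cancel h1
    exact ⟨s ++ s', Language.mem_mul.2 ⟨s, ⟨⟨c, b', hs⟩, e⟩, s', ⟨⟨b', b, hs'⟩, e'⟩, rfl⟩,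
      redW_eq_of_mk hmk hw.2.1⟩

theorem extendable : Extendable (epi φ β) (sec X B) := by
  rintro u ⟨c, b, hu⟩
  obtain ⟨v, hv, hpow, N, hN⟩ := exists_extension hu
  refine ⟨v, (mem_Reduced v).2 hv.2.1, fun n => ⟨c, b, hpow n⟩, N, fun n hn => ?_⟩
  obtain ⟨t, ht, hmk⟩ := hN n hn
  refine ⟨t, ⟨c, c, ht⟩, ?_⟩
  have hconj : ((β b)⁻¹ * φ (FreeGroup.mk (del v)) * β b) ^ n =
      (β b)⁻¹ * φ (FreeGroup.mk (del v)) ^ n * β b := by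
    simpa using _root_.conj_pow (i := n) (a := (β b)⁻¹) (b := φ (FreeGroup.mk (del v)))
  rw [Set.mem_singleton_iff, ev_good φ β ht, ev_good φ β hu, ev_good φ β hv, hmk, hconj,
    _root_.map_mul, _root_.map_mul, _root_.map_pow, _root_.map_inv]
  group

theorem isMEpi (hβ : ∀ g, ∃ b f, g = φ f * β b) : IsMEpi (epi φ β) where
  surjective := by
    intro g
    obtain ⟨c, -⟩ := hβ 1
    obtain ⟨b, d, hd, hg⟩ := exists_trace hβ c g
    have h : Good c b (visit (c, 0) d (b, 1)) := good_visit (by simp) hd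
    exact ⟨_, (ev_good φ β h).trans (by rw [del_visit, hg])⟩
  matched := by
    intro a b
    simp only [epi, FreeMonoid.lift_eval_of]
    rw [← _root_.map_inv, ← mk_wordInv]
    rfl

end Group

end StallingsProof

open Stallings in
/-- Every finitely generated virtually free group has an extendable
Stallings section. -/
theorem exists_extendable_stallingsSection {G : Type} [Group G] (hfg : Group.FG G)
    (hvf : ∃ F : Subgroup G, IsFreeGroup F ∧ F.FiniteIndex) :
    ∃ (α : Type) (π : FreeMonoid (α × Bool) →* G) (S : Language (α × Bool)),
      Finite α ∧ IsMEpi π ∧ IsStallingsSection π S ∧ Extendable π S := by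
  obtain ⟨F, hF, hFi⟩ := hvf
  obtain ⟨X, ⟨e⟩⟩ := hF.nonempty_basis
  have hFfg : Group.FG F := inferInstance
  have : Finite X := StallingsProof.finite_of_fg
    (Group.fg_of_surjective (f := e.repr.toMonoidHom) e.repr.surjective)
  let φ : FreeGroup X →* G := F.subtype.comp e.repr.symm.toMonoidHom
  have hφ : Function.Injective φ := F.subtype_injective.comp e.repr.symm.injective
  -- inverting representatives of the left cosets gives representatives of the right cosets
  let β : G ⧸ F → G := fun q => q.out⁻¹
  have hβ : ∀ g, ∃ b f, g = φ f * β b := by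
    intro g
    have hm : (Quotient.out ((g⁻¹ : G) : G ⧸ F))⁻¹ * g⁻¹ ∈ F :=
      QuotientGroup.eq.1 (QuotientGroup.out_eq' ((g⁻¹ : G) : G ⧸ F))
    refine ⟨((g⁻¹ : G) : G ⧸ F), e.repr (⟨_, hm⟩⁻¹), ?_⟩
    simp [φ, β]
  exact ⟨StallingsProof.Gen X (G ⧸ F), StallingsProof.epi φ β, StallingsProof.sec X (G ⧸ F),
    inferInstance, StallingsProof.isMEpi hβ, StallingsProof.isStallings hφ hβ,
    StallingsProof.extendable⟩
end
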